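/- arXiv:1806.07107 — 10 statements merged into one kernel-verified Lean document; each statement's English description precedes it below -/
import Mathlib

section
/- Let R be a field and let c : ℤ² → R be a configuration (a function taking only finitely many values). If c has low complexity, i.e., there is a finite nonempty set D ⊆ ℤ² such that the number of distinct D-patterns of c is at most |D|, then there exists a nonzero Laurent polynomial f over R in two variables that annihilates c. -/
/-- Laurent polynomials over `R` in two variables: finitely supported functions
`ℤ² → R`, multiplied by convolution. -/
abbrev LP (R : Type*) [CommRing R] := AddMonoidAlgebra R (ℤ × ℤ)

/-- `f` annihilates the configuration `c` if the formal product of `f` with the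
power series of `c` is the zero power series. -/
def Annihilates {R : Type*} [CommRing R] (f : LP R) (c : ℤ × ℤ → R) : Prop :=
  ∀ n : ℤ × ℤ, ∑ m ∈ f.coeff.support, f.coeff m * c (n - m) = 0

/-- The set of `D`-patterns of `c`. -/
def Patterns {R : Type*} (c : ℤ × ℤ → R) (D : Finset (ℤ × ℤ)) : Set (D → R) :=
  Set.range fun t : ℤ × ℤ => fun d : D => c (t + d.1)

/-- `c` has low complexity with respect to some finite nonempty shape. -/
def LowComplexity {R : Type*} (c : ℤ × ℤ → R) : Prop :=
  ∃ D : Finset (ℤ × ℤ), D.Nonempty ∧ (Patterns c D).ncard ≤ D.card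

/-- `t` is a period vector of `c`. -/
def IsPeriodVector {R : Type*} (c : ℤ × ℤ → R) (t : ℤ × ℤ) : Prop :=
  t ≠ 0 ∧ ∀ n : ℤ × ℤ, c (n + t) = c n

/-- `c` is periodic. -/
def Periodic {R : Type*} (c : ℤ × ℤ → R) : Prop :=
  ∃ t : ℤ × ℤ, IsPeriodVector c t

/-- `c` is two-periodic: it has two linearly independent period vectors. -/
def TwoPeriodic {R : Type*} (c : ℤ × ℤ → R) : Prop :=
  ∃ t₁ t₂ : ℤ × ℤ, IsPeriodVector c t₁ ∧ IsPeriodVector c t₂ ∧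
    t₁.1 * t₂.2 - t₁.2 * t₂.1 ≠ 0

/-- `f` is a line polynomial in direction `u`: its support has at least two elements
and lies on a line `{n + r • u : r ∈ ℚ}`. -/
def IsLinePoly {R : Type*} [CommRing R] (u : ℤ × ℤ) (f : LP R) : Prop :=
  1 < f.coeff.support.card ∧ ∃ n : ℤ × ℤ, ∀ m ∈ f.coeff.support, ∃ r : ℚ,
    (m.1 : ℚ) = n.1 + r * u.1 ∧ (m.2 : ℚ) = n.2 + r * u.2

/-- A finite set `D ⊆ ℤ²` has an outer edge perpendicular to `v`. -/
def HasOuterEdge (D : Finset (ℤ × ℤ)) (v : ℤ × ℤ) : Prop :=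
  ∃ x ∈ D, (∀ y ∈ D, 0 ≤ (y.1 - x.1) * v.1 + (y.2 - x.2) * v.2) ∧
    ∃ y₁ ∈ D, ∃ y₂ ∈ D, y₁ ≠ y₂ ∧
      (y₁.1 - x.1) * v.1 + (y₁.2 - x.2) * v.2 = 0 ∧
      (y₂.1 - x.1) * v.1 + (y₂.2 - x.2) * v.2 = 0

/-- The value of the product of `f` with `c` at `n`, as a linear map in `f`. -/
noncomputable def convAt {R : Type*} [Field R] (c : ℤ × ℤ → R) (n : ℤ × ℤ) : LP R →ₗ[R] R :=
  (Finsupp.lsum R fun m : ℤ × ℤ => LinearMap.mulRight R (c (n - m))) ∘ₗ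
    (AddMonoidAlgebra.coeffLinearEquiv R).toLinearMap

theorem convAt_single {R : Type*} [Field R] (c : ℤ × ℤ → R) (n m : ℤ × ℤ) (r : R) :
    convAt c n (AddMonoidAlgebra.single m r) = r * c (n - m) := by
  simp [convAt, AddMonoidAlgebra.coeffLinearEquiv]

theorem convAt_eq {R : Type*} [Field R] (c : ℤ × ℤ → R) (n : ℤ × ℤ) (f : LP R) :
    convAt c n f = ∑ m ∈ f.coeff.support, f.coeff m * c (n - m) := by
  simp [convAt, AddMonoidAlgebra.coeffLinearEquiv, Finsupp.sum]

theorem convAt_single_mul {R : Type*} [Field R] (c : ℤ × ℤ → R) (n e : ℤ × ℤ) (f : LP R) :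
    convAt c n (AddMonoidAlgebra.single e 1 * f) = convAt c (n - e) f := by
  induction f using AddMonoidAlgebra.induction_linear with
  | zero => simp
  | add f g hf hg => rw [mul_add, map_add, map_add, hf, hg]
  | single m r =>
    rw [AddMonoidAlgebra.single_mul_single, convAt_single, convAt_single, one_mul, sub_sub]

theorem exists_affine_relation {R : Type*} [Field R] {ι : Type*} [Fintype ι]
    (P : Set (ι → R)) (hP : P.Finite) (hne : P.Nonempty) (hcard : P.ncard ≤ Fintype.card ι) :
    ∃ (a : ι → R) (b : R), a ≠ 0 ∧ ∀ p ∈ P, ∑ d, a d * p d = b := by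
  classical
  have := hP.fintype
  let L : ((ι → R) × R) →ₗ[R] (P → R) :=
    { toFun := fun x p => ∑ d, x.1 d * p.1 d - x.2
      map_add' := by
        intro x y; ext p
        simp only [Prod.fst_add, Prod.snd_add, Pi.add_apply, add_mul, Finset.sum_add_distrib]
        ring
      map_smul' := by
        intro r x; ext p
        simp [mul_sub, Finset.mul_sum, mul_assoc] }
  have hk : LinearMap.ker L ≠ ⊥ := by
    apply LinearMap.ker_ne_bot_of_finrank_lt
    rw [Module.finrank_prod, Module.finrank_pi, Module.finrank_pi, Module.finrank_self,
      ← Nat.card_eq_fintype_card (α := P), Nat.card_coe_set_eq]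
    omega
  obtain ⟨x, hx, hx0⟩ := Submodule.exists_mem_ne_zero_of_ne_bot hk
  have hrel : ∀ p ∈ P, ∑ d, x.1 d * p d = x.2 := by
    intro p hp
    exact sub_eq_zero.mp (congrFun (LinearMap.mem_ker.mp hx) ⟨p, hp⟩)
  refine ⟨x.1, x.2, fun h => hx0 ?_, hrel⟩
  obtain ⟨p, hp⟩ := hne
  have h2 := hrel p hp
  rw [h] at h2
  exact Prod.ext h (by simpa using h2.symm)

/-- over a field, a low complexity configuration has a nonzero annihilator. -/
theorem low_complexity_has_annihilator_field {R : Type*} [Field R] (c : ℤ × ℤ → R)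
    (hfin : (Set.range c).Finite) (hlc : LowComplexity c) :
    ∃ f : LP R, f ≠ 0 ∧ Annihilates f c := by
  classical
  obtain ⟨D, -, hD⟩ := hlc
  have hPfin : (Patterns c D).Finite := by
    refine (Set.Finite.pi' fun _ : D => hfin).subset ?_
    rintro _ ⟨t, rfl⟩ d
    exact ⟨_, rfl⟩
  obtain ⟨a, b, ha, hab⟩ := exists_affine_relation (Patterns c D) hPfin
    (Set.range_nonempty _) (by simpa using hD)
  let g : LP R := ∑ d : D, AddMonoidAlgebra.single (-d.1) (a d)
  have hg : ∀ n, convAt c n g = b := by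
    intro n
    rw [← hab _ ⟨n, rfl⟩]
    simp only [g, map_sum, convAt_single, sub_neg_eq_add]
  have hg0 : g ≠ 0 := by
    intro h
    apply ha
    funext d
    have h1 : g.coeff (-d.1) = 0 := by rw [h]; rfl
    simpa [g, AddMonoidAlgebra.coeff_sum, Finsupp.finsetSum_apply, Finsupp.single_apply,
      Subtype.ext_iff, ← Subtype.ext_iff] using h1
  refine ⟨(AddMonoidAlgebra.single (1, 0) 1 - AddMonoidAlgebra.single 0 1) * g,
    mul_ne_zero ?_ hg0, fun n => ?_⟩
  · rw [sub_ne_zero]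
    intro h
    have h1 := congrArg (fun f : LP R => f.coeff (0, 0)) h
    simp [Finsupp.single_apply] at h1
    exact h1 rfl
  · rw [← convAt_eq, sub_mul, map_sub, convAt_single_mul, convAt_single_mul, hg, hg, sub_self]
end

section
/- Let c : ℤ² → ℤ be a configuration (a function taking only finitely many values). If c has low complexity, i.e., there is a finite nonempty set D ⊆ ℤ² such that the number of distinct D-patterns of c is at most |D|, then there exists a nonzero Laurent polynomial f over ℤ in two variables that annihilates c. -/
/-- over ℤ, a low complexity configuration has a nonzero annihilator. -/
theorem low_complexity_has_annihilator_int (c : ℤ × ℤ → ℤ)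
    (hfin : (Set.range c).Finite) (hlc : LowComplexity c) :
    ∃ f : LP ℤ, f ≠ 0 ∧ Annihilates f c := by
  classical
  obtain ⟨D, hD, hcard⟩ := hlc
  have hPfin : (Patterns c D).Finite := by
    refine (Set.Finite.pi' (ι := D) (t := fun _ => Set.range c) (fun _ => hfin)).subset ?_
    rintro _ ⟨t, rfl⟩ d
    exact ⟨_, rfl⟩
  haveI : Fintype (Patterns c D) := hPfin.fintype
  -- a linear relation, with constant term, satisfied by all the patterns
  let F : (Option D → ℤ) →ₗ[ℤ] (Patterns c D → ℤ) :=
    { toFun := fun a p => a none + ∑ d : D, a (some d) * p.1 d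
      map_add' := by
        intro a b
        funext p
        simp only [Pi.add_apply, add_mul, Finset.sum_add_distrib]
        ring
      map_smul' := by
        intro r a
        funext p
        simp only [Pi.smul_apply, smul_eq_mul, RingHom.id_apply, mul_add, Finset.mul_sum, mul_assoc] }
  have hF : ¬ Function.Injective F := by
    intro h
    have h1 := card_le_of_injective ℤ F h
    rw [Fintype.card_option, Fintype.card_coe, ← Nat.card_eq_fintype_card,
      Nat.card_coe_set_eq] at h1
    omega
  obtain ⟨a, ha0, ha⟩ : ∃ a, F a = 0 ∧ a ≠ 0 := by
    by_contra! hcon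
    exact hF ((injective_iff_map_eq_zero F).2 hcon)
  have hrel : ∀ t : ℤ × ℤ, a none + ∑ d : D, a (some d) * c (t + d.1) = 0 := by
    intro t
    exact congrFun ha0 ⟨_, ⟨t, rfl⟩⟩
  let g : LP ℤ := ∑ d : D, AddMonoidAlgebra.single (-d.1) (a (some d))
  have hgd : ∀ d : D, g.coeff (-d.1) = a (some d) := by
    intro d
    simp [g, AddMonoidAlgebra.coeff_sum, Finsupp.finsetSum_apply, Finsupp.single_apply,
      Subtype.ext_iff.symm]
  have hg : g ≠ 0 := by
    intro h
    have h1 : ∀ d : D, a (some d) = 0 := by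
      intro d
      rw [← hgd d, h]; rfl
    have h2 := hrel 0
    simp only [h1, zero_mul, Finset.sum_const_zero, add_zero] at h2
    apply ha
    funext o
    cases o with
    | none => exact h2
    | some d => exact h1 d
  let s : LP ℤ := AddMonoidAlgebra.single ((1, 0) : ℤ × ℤ) (1 : ℤ) - AddMonoidAlgebra.single 0 1
  have hs : s ≠ 0 := by
    intro h
    have h1 : s.coeff (0 : ℤ × ℤ) = 0 := by rw [h]; rfl
    simp [s, Finsupp.single_apply] at h1
  refine ⟨s * g, mul_ne_zero hs hg, ?_⟩
  intro n
  have key : ∀ f : LP ℤ, ∑ m ∈ f.coeff.support, f.coeff m * c (n - m)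
      = Finsupp.linearCombination ℤ (fun m => c (n - m)) f.coeff := by
    intro f
    simp [Finsupp.linearCombination_apply, Finsupp.sum]
  have hsg : s * g = ∑ d : D, AddMonoidAlgebra.single ((1, 0) - d.1) (a (some d))
      - ∑ d : D, AddMonoidAlgebra.single (-d.1) (a (some d)) := by
    simp only [s, g, sub_mul, Finset.mul_sum, AddMonoidAlgebra.single_mul_single, one_mul,
      zero_add, Finset.sum_sub_distrib]
    simp only [sub_eq_add_neg]
  rw [key, hsg, AddMonoidAlgebra.coeff_sub, map_sub, AddMonoidAlgebra.coeff_sum,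
    AddMonoidAlgebra.coeff_sum, map_sum, map_sum]
  simp only [AddMonoidAlgebra.coeff_single, Finsupp.linearCombination_single, smul_eq_mul]
  have e1 := hrel (n - (1, 0))
  have e2 := hrel n
  have e3 : ∀ d : ℤ × ℤ, n - ((1, 0) - d) = n - (1, 0) + d := fun d => by abel
  simp only [e3, sub_neg_eq_add]
  linarith
end

section
/- Let c : ℤ² → ℤ be a configuration (a function taking only finitely many values) that is annihilated by some nonzero Laurent polynomial over ℤ. Then there exist m ≥ 1 and nonzero vectors (i₁,j₁), …, (i_m,j_m) ∈ ℤ² such that the product (X^{i₁}Y^{j₁} − 1)···(X^{i_m}Y^{j_m} − 1) annihilates c. -/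
namespace AnnDec

abbrev V := ℤ × ℤ → ℤ

/-- Translation operators. -/
def shift : Multiplicative (ℤ × ℤ) →* Module.End ℤ V where
  toFun m :=
    { toFun := fun c n => c (n - m.toAdd)
      map_add' := by intros; rfl
      map_smul' := by intros; rfl }
  map_one' := by ext c n; simp
  map_mul' a b := by
    refine LinearMap.ext fun c => funext fun n => ?_
    simp [sub_sub]

noncomputable def rho : LP ℤ →ₐ[ℤ] Module.End ℤ V :=
  AddMonoidAlgebra.lift ℤ (Module.End ℤ V) (ℤ × ℤ) shift

lemma rho_single (v : ℤ × ℤ) (a : ℤ) (c : V) (n : ℤ × ℤ) :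
    rho (AddMonoidAlgebra.single v a) c n = a * c (n - v) := by
  simp [rho, AddMonoidAlgebra.lift_single, shift]

lemma rho_apply (f : LP ℤ) (c : V) (n : ℤ × ℤ) :
    rho f c n = ∑ m ∈ f.coeff.support, f.coeff m * c (n - m) := by
  simp [rho, AddMonoidAlgebra.lift_apply, Finsupp.sum, shift]

lemma ann_iff (f : LP ℤ) (c : V) : Annihilates f c ↔ rho f c = 0 := by
  constructor
  · intro h
    funext n
    rw [rho_apply]
    exact h n
  · intro h n
    rw [← rho_apply, h]
    rfl

/-- The ideal of annihilators. -/
noncomputable def annI (c : V) : Ideal (LP ℤ) where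
  carrier := {f | rho f c = 0}
  add_mem' := by
    intro a b ha hb
    simp only [Set.mem_ofPred_eq] at *
    simp [ha, hb]
  zero_mem' := by simp
  smul_mem' := by
    intro a b hb
    simp only [Set.mem_ofPred_eq] at *
    simp [hb]

lemma mem_annI (f : LP ℤ) (c : V) : f ∈ annI c ↔ rho f c = 0 := Iff.rfl

noncomputable def F (f : LP ℤ) (k : ℕ) : LP ℤ :=
  ∑ v ∈ f.coeff.support, AddMonoidAlgebra.single (k • v) (f.coeff v)

lemma F_one (f : LP ℤ) : F f 1 = f := by
  have := AddMonoidAlgebra.sum_coeff_single f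
  simpa [F, Finsupp.sum] using this

lemma sum_pow_prime {R ι : Type*} [CommRing R] (p : ℕ) (hp : p.Prime) (s : Finset ι) (x : ι → R) :
    ∃ r : R, (∑ i ∈ s, x i) ^ p = ∑ i ∈ s, x i ^ p + p * r := by
  classical
  induction s using Finset.induction_on with
  | empty => exact ⟨0, by simp [hp.ne_zero]⟩
  | insert a s ha ih =>
    obtain ⟨r, hr⟩ := ih
    obtain ⟨r', hr'⟩ := exists_add_pow_prime_eq hp (x a) (∑ i ∈ s, x i)
    rw [Finset.sum_insert ha, Finset.sum_insert ha, hr', hr]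
    exact ⟨r + x a * (∑ i ∈ s, x i) * r', by ring⟩

lemma int_pow_prime (p : ℕ) (hp : p.Prime) (a : ℤ) : ∃ s : ℤ, a ^ p = a + p * s := by
  have := Fact.mk hp
  have : ((a ^ p - a : ℤ) : ZMod p) = 0 := by simp
  rw [ZMod.intCast_zmod_eq_zero_iff_dvd] at this
  obtain ⟨s, hs⟩ := this
  exact ⟨s, by linarith⟩

lemma F_pow (f : LP ℤ) (k p : ℕ) (hp : p.Prime) :
    ∃ r : LP ℤ, F f (p * k) = F f k ^ p + (p : LP ℤ) * r := by
  obtain ⟨r, hr⟩ := sum_pow_prime p hp f.coeff.support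
    (fun v => (AddMonoidAlgebra.single (k • v) (f.coeff v) : LP ℤ))
  choose s hs using int_pow_prime p hp
  refine ⟨-r - ∑ v ∈ f.coeff.support, AddMonoidAlgebra.single ((p * k) • v) (s (f.coeff v)), ?_⟩
  have h2 : ∀ v, (AddMonoidAlgebra.single (k • v) (f.coeff v) : LP ℤ) ^ p
      = AddMonoidAlgebra.single ((p * k) • v) (f.coeff v)
        + (p : LP ℤ) * AddMonoidAlgebra.single ((p * k) • v) (s (f.coeff v)) := by
    intro v
    rw [AddMonoidAlgebra.single_pow, hs, AddMonoidAlgebra.single_add, smul_smul, ← nsmul_eq_mul,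
      ← AddMonoidAlgebra.smul_single, nsmul_eq_mul p (AddMonoidAlgebra.single _ _ : LP ℤ)]
  simp only [h2, Finset.sum_add_distrib, ← Finset.mul_sum] at hr
  unfold F
  rw [hr]
  ring

lemma F_bound (f : LP ℤ) (c : V) (M : ℕ) (hM : ∀ n, |c n| ≤ M) (k : ℕ) (n : ℤ × ℤ) :
    |rho (F f k) c n| ≤ ((∑ v ∈ f.coeff.support, (f.coeff v).natAbs * M : ℕ) : ℤ) := by
  have : rho (F f k) c n = ∑ v ∈ f.coeff.support, f.coeff v * c (n - k • v) := by
    simp only [F, map_sum, LinearMap.sum_apply, Finset.sum_apply, rho_single]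
  rw [this]
  refine (Finset.abs_sum_le_sum_abs _ _).trans ?_
  push_cast
  refine Finset.sum_le_sum fun v _ => ?_
  rw [abs_mul]
  exact mul_le_mul_of_nonneg_left (hM _) (abs_nonneg _)

lemma F_step (f : LP ℤ) (c : V) (B : ℕ) (hB : ∀ k n, |rho (F f k) c n| ≤ (B : ℤ))
    (k p : ℕ) (hp : p.Prime) (hpB : B < p) (hk : F f k ∈ annI c) : F f (p * k) ∈ annI c := by
  obtain ⟨r, hr⟩ := F_pow f k p hp
  have h1 : F f k ^ p ∈ annI c := Ideal.pow_mem_of_mem _ hk p hp.pos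
  rw [mem_annI] at h1 ⊢
  funext n
  have h2 : rho (F f (p * k)) c n = p * rho r c n := by
    rw [hr, map_add, LinearMap.add_apply, h1, zero_add, ← nsmul_eq_mul, map_nsmul]
    simp
  have h3 := hB (p * k) n
  refine Int.eq_zero_of_abs_lt_dvd (m := (p : ℤ)) ⟨_, h2⟩ ?_
  exact lt_of_le_of_lt h3 (by exact_mod_cast hpB)

lemma F_all (f : LP ℤ) (c : V) (B : ℕ) (hB : ∀ k n, |rho (F f k) c n| ≤ (B : ℤ))
    (h1 : f ∈ annI c) (k : ℕ) : k ≠ 0 → (∀ q, q.Prime → q ∣ k → B < q) → F f k ∈ annI c := by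
  induction k using induction_on_primes with
  | zero => intro h; exact absurd rfl h
  | one => intro _ _; rw [F_one]; exact h1
  | prime_mul p a hp ih =>
    intro h0 hq
    refine F_step f c B hB a p hp (hq p hp (dvd_mul_right _ _)) (ih ?_ ?_)
    · rintro rfl; simp at h0
    · intro q hqp hqa
      exact hq q hqp (hqa.mul_left _)

lemma exists_r (f : LP ℤ) (c : V) (hfin : (Set.range c).Finite) (h1 : f ∈ annI c) :
    ∃ r : ℕ, r ≠ 0 ∧ ∀ i : ℕ, F f (1 + r * i) ∈ annI c := by
  obtain ⟨M, hM⟩ := (hfin.image Int.natAbs).bddAbove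
  have hM' : ∀ n, |c n| ≤ (M : ℤ) := by
    intro n
    have := hM ⟨c n, ⟨n, rfl⟩, rfl⟩
    rw [Int.abs_eq_natAbs]
    exact_mod_cast this
  have hB := F_bound f c M hM'
  set B := ∑ v ∈ f.coeff.support, (f.coeff v).natAbs * M with hBdef
  refine ⟨B.factorial, B.factorial_ne_zero, fun i => F_all f c B hB h1 _ (by omega) ?_⟩
  intro q hq hd
  by_contra! hle
  have h2 : q ∣ B.factorial * i := ((hq.dvd_factorial).2 hle).mul_right _
  have h3 : q ∣ 1 := (Nat.dvd_add_left h2).1 hd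
  exact hq.one_lt.ne' (Nat.dvd_one.1 h3)

lemma poly_mem (f : LP ℤ) (c : V) (r : ℕ) (hr : ∀ i : ℕ, F f (1 + r * i) ∈ annI c)
    (q : Polynomial (LP ℤ)) :
    ∑ v ∈ f.coeff.support, (AddMonoidAlgebra.single v (f.coeff v) : LP ℤ) *
      q.eval (AddMonoidAlgebra.single (r • v) 1) ∈ annI c := by
  have : ∑ v ∈ f.coeff.support, (AddMonoidAlgebra.single v (f.coeff v) : LP ℤ) *
      q.eval (AddMonoidAlgebra.single (r • v) 1)
      = ∑ i ∈ Finset.range (q.natDegree + 1), q.coeff i * F f (1 + r * i) := by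
    simp only [F, Polynomial.eval_eq_sum_range, Finset.mul_sum]
    rw [Finset.sum_comm]
    refine Finset.sum_congr rfl fun i _ => Finset.sum_congr rfl fun v _ => ?_
    rw [AddMonoidAlgebra.single_pow, mul_left_comm, AddMonoidAlgebra.single_mul_single]
    congr 2
    · rw [add_smul, one_smul, mul_comm r i, mul_smul]
    · simp
  rw [this]
  exact Ideal.sum_mem _ fun i _ => Ideal.mul_mem_left _ _ (hr i)

lemma key (f : LP ℤ) (hf : f ≠ 0) (c : V) (hfin : (Set.range c).Finite) (h1 : f ∈ annI c) :
    ∃ (s : Finset (ℤ × ℤ)) (t : ℤ × ℤ → ℤ × ℤ), (∀ u ∈ s, t u ≠ 0) ∧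
      ∏ u ∈ s, (AddMonoidAlgebra.single (t u) 1 - 1 : LP ℤ) ∈ annI c := by
  classical
  obtain ⟨r, hr0, hr⟩ := exists_r f c hfin h1
  have hne : f.coeff.support.Nonempty := by
    rw [Finset.nonempty_iff_ne_empty]
    intro h
    apply hf
    rw [← F_one f, F, h, Finset.sum_empty]
  obtain ⟨v0, hv0⟩ := hne
  refine ⟨f.coeff.support.erase v0, fun u => r • (v0 - u), ?_, ?_⟩
  · intro u hu
    exact smul_ne_zero hr0 (sub_ne_zero.2 (Finset.ne_of_mem_erase hu).symm)
  set s := f.coeff.support.erase v0 with hs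
  have h := poly_mem f c r hr (∏ u ∈ s,
    (Polynomial.C (AddMonoidAlgebra.single (-(r • u)) 1 : LP ℤ) * Polynomial.X - 1))
  have hE : ∀ v u : ℤ × ℤ, (AddMonoidAlgebra.single (-(r • u)) 1 : LP ℤ) *
      AddMonoidAlgebra.single (r • v) 1 = AddMonoidAlgebra.single (r • (v - u)) 1 := by
    intro v u
    rw [AddMonoidAlgebra.single_mul_single, smul_sub, neg_add_eq_sub, mul_one]
  simp only [Polynomial.eval_prod, Polynomial.eval_sub, Polynomial.eval_mul, Polynomial.eval_C,
    Polynomial.eval_X, Polynomial.eval_one, hE] at h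
  rw [Finset.sum_eq_single_of_mem v0 hv0] at h
  · have h' := Ideal.mul_mem_left _ (AddMonoidAlgebra.single (-v0) 1 : LP ℤ) h
    rw [← mul_assoc, AddMonoidAlgebra.single_mul_single, neg_add_cancel, one_mul] at h'
    have ha : f.coeff v0 ≠ 0 := Finsupp.mem_support_iff.1 hv0
    have h4 : (AddMonoidAlgebra.single 0 (f.coeff v0) : LP ℤ)
      = algebraMap ℤ (LP ℤ) (f.coeff v0) := by
      rw [AddMonoidAlgebra.coe_algebraMap]; rfl
    rw [h4, ← Algebra.smul_def, mem_annI, map_smul, LinearMap.smul_apply] at h'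
    rw [mem_annI]
    exact (smul_eq_zero.1 h').resolve_left ha
  · intro v hv hvne
    rw [Finset.prod_eq_zero (Finset.mem_erase.2 ⟨hvne, hv⟩), mul_zero]
    rw [sub_self, smul_zero, AddMonoidAlgebra.one_def, sub_self]

end AnnDec

/-- a configuration over ℤ with a nonzero annihilator is annihilated by a
product of difference polynomials (X^i Y^j − 1). -/
theorem annihilator_decomposition (c : ℤ × ℤ → ℤ) (hfin : (Set.range c).Finite)
    (h : ∃ f : LP ℤ, f ≠ 0 ∧ Annihilates f c) :
    ∃ m : ℕ, 1 ≤ m ∧ ∃ t : Fin m → ℤ × ℤ, (∀ i, t i ≠ 0) ∧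
      Annihilates (∏ i : Fin m, (AddMonoidAlgebra.single (t i) 1 - 1 : LP ℤ)) c := by
  obtain ⟨f, hf, hfc⟩ := h
  obtain ⟨s, t, ht, hs⟩ := AnnDec.key f hf c hfin ((AnnDec.ann_iff f c).1 hfc)
  refine ⟨s.card + 1, by omega, Fin.cons (1, 0) (fun i => t (s.equivFin.symm i)), ?_, ?_⟩
  · intro i
    refine Fin.cases ?_ (fun j => ?_) i
    · simp
    · simpa using ht _ (s.equivFin.symm j).2
  · rw [AnnDec.ann_iff, ← AnnDec.mem_annI, Fin.prod_univ_succ]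
    refine Ideal.mul_mem_left _ _ ?_
    simp only [Fin.cons_succ]
    rw [Equiv.prod_comp s.equivFin.symm
      (fun u : s => (AddMonoidAlgebra.single (t u) 1 - 1 : LP ℤ)),
      Finset.prod_coe_sort s (fun u => (AddMonoidAlgebra.single (t u) 1 - 1 : LP ℤ))]
    exact hs
end

section
/- Let R be an integral domain and let g, h be nonzero Laurent polynomials over R in two variables. If the support of g has an outer edge perpendicular to a nonzero vector v ∈ ℤ², then the support of the product gh also has an outer edge perpendicular to v. -/
/-- outer edges of supports are preserved under multiplication. -/
theorem outer_edge_of_mul {R : Type*} [CommRing R] [IsDomain R] (g h : LP R)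
    (hg : g ≠ 0) (hh : h ≠ 0) (v : ℤ × ℤ) (hv : v ≠ 0)
    (hedge : HasOuterEdge g.coeff.support v) :
    HasOuterEdge (g * h).coeff.support v := by
  classical
  obtain ⟨x, hx, hmin, y₁, hy₁, y₂, hy₂, hne, e₁, e₂⟩ := hedge
  let φ : ℤ × ℤ → ℤ := fun p => p.1 * v.1 + p.2 * v.2
  have φadd : ∀ p q, φ (p + q) = φ p + φ q := by
    intro p q; simp only [φ, Prod.fst_add, Prod.snd_add]; ring
  have φsub : ∀ p q : ℤ × ℤ, (p.1 - q.1) * v.1 + (p.2 - q.2) * v.2 = φ p - φ q := by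
    intro p q; simp only [φ]; ring
  simp only [HasOuterEdge, φsub] at *
  have hhs : h.coeff.support.Nonempty := by
    rw [Finset.nonempty_iff_ne_empty]
    intro h0
    apply hh
    ext p
    simpa using (Finset.ext_iff.1 h0 p)
  obtain ⟨z, hz, hzmin⟩ := Finset.exists_min_image h.coeff.support φ hhs
  let A := g.coeff.support.filter fun p => φ p = φ x
  let B := h.coeff.support.filter fun p => φ p = φ z
  have hA : 1 < A.card := Finset.one_lt_card.2
    ⟨y₁, by simp only [A, Finset.mem_filter]; exact ⟨hy₁, by linarith⟩,
     y₂, by simp only [A, Finset.mem_filter]; exact ⟨hy₂, by linarith⟩, hne⟩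
  have hB : 0 < B.card := Finset.card_pos.2
    ⟨z, by simp only [B, Finset.mem_filter]; exact ⟨hz, trivial⟩⟩
  obtain ⟨p, hp, q, hq, hpq, up, uq⟩ :=
    TwoUniqueSums.uniqueAdd_of_one_lt_card (A := A) (B := B) (by nlinarith)
  have key : ∀ r ∈ A ×ˢ B, UniqueAdd A B r.1 r.2 →
      r.1 + r.2 ∈ (g * h).coeff.support ∧ φ (r.1 + r.2) = φ x + φ z := by
    intro r hr ur
    simp only [A, B, Finset.mem_product, Finset.mem_filter] at hr
    obtain ⟨⟨h1, h2⟩, h3, h4⟩ := hr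
    refine ⟨?_, by rw [φadd, h2, h4]⟩
    have uu : UniqueAdd g.coeff.support h.coeff.support r.1 r.2 := by
      intro a b ha hb hab
      have h5 := hmin a ha
      have h6 := hzmin b hb
      have h7 := φadd a b
      rw [hab, φadd] at h7
      exact ur (by simp only [A, Finset.mem_filter]; exact ⟨ha, by linarith⟩)
        (by simp only [B, Finset.mem_filter]; exact ⟨hb, by linarith⟩) hab
    rw [Finsupp.mem_support_iff, AddMonoidAlgebra.coeff_mul_add_of_uniqueAdd uu]
    exact mul_ne_zero (Finsupp.mem_support_iff.1 h1) (Finsupp.mem_support_iff.1 h3)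
  obtain ⟨kp, kp'⟩ := key p hp up
  obtain ⟨kq, kq'⟩ := key q hq uq
  refine ⟨_, kp, ?_, _, kp, _, kq, ?_, by simp, by rw [kp', kq']; simp⟩
  · intro y hy
    obtain ⟨a, ha, b, hb, rfl⟩ := Finset.mem_add.1 (AddMonoidAlgebra.support_coeff_mul_subset g h hy)
    have h5 := hmin a ha
    have h6 := hzmin b hb
    rw [kp', φadd]
    linarith
  · intro e
    obtain ⟨h1, h2⟩ := Finset.mem_product.1 hq
    obtain ⟨e1, e2⟩ := up h1 h2 e.symm
    exact hpq (Prod.ext e1.symm e2.symm)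
end

section
/- Let R be an integral domain and let f be a nonzero Laurent polynomial over R in two variables. If f has a line polynomial factor in direction u ∈ ℤ²∖{0}, then supp(f) has outer edges perpendicular both to v and to −v, where v ∈ ℤ²∖{0} is a vector perpendicular to u. -/
/-- dot product -/
def dotv (v x : ℤ × ℤ) : ℤ := x.1 * v.1 + x.2 * v.2

lemma dotv_add (v x y : ℤ × ℤ) : dotv v (x + y) = dotv v x + dotv v y := by
  simp only [dotv, Prod.fst_add, Prod.snd_add]; ring

lemma eq_of_dotv {v w x y : ℤ × ℤ} (hd : v.1 * w.2 - v.2 * w.1 ≠ 0)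
    (h1 : dotv v x = dotv v y) (h2 : dotv w x = dotv w y) : x = y := by
  simp only [dotv] at h1 h2
  ext
  · apply mul_right_cancel₀ hd; linear_combination w.2 * h1 - v.2 * h2
  · apply mul_right_cancel₀ hd; linear_combination v.1 * h2 - w.1 * h1

lemma exists_lex_min (v w : ℤ × ℤ) (D : Finset (ℤ × ℤ)) (hD : D.Nonempty) :
    ∃ a ∈ D, ∀ x ∈ D, dotv v a < dotv v x ∨ (dotv v a = dotv v x ∧ dotv w a ≤ dotv w x) := by
  obtain ⟨a, ha, h⟩ := D.exists_min_image (fun x => toLex (dotv v x, dotv w x)) hD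
  refine ⟨a, ha, fun x hx => ?_⟩
  have := h x hx
  rw [Prod.Lex.toLex_le_toLex] at this
  exact this

lemma corner {R : Type*} [CommRing R] [IsDomain R] (g h : LP R) (v w : ℤ × ℤ)
    (hd : v.1 * w.2 - v.2 * w.1 ≠ 0)
    (a b : ℤ × ℤ) (ha : a ∈ g.coeff.support) (hb : b ∈ h.coeff.support)
    (ha' : ∀ x ∈ g.coeff.support,
      dotv v a < dotv v x ∨ (dotv v a = dotv v x ∧ dotv w a ≤ dotv w x))
    (hb' : ∀ x ∈ h.coeff.support,
      dotv v b < dotv v x ∨ (dotv v b = dotv v x ∧ dotv w b ≤ dotv w x)) :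
    a + b ∈ (g * h).coeff.support := by
  have hU : UniqueAdd g.coeff.support h.coeff.support a b := by
    intro x y hx hy hxy
    have e1 := congrArg (dotv v) hxy
    have e2 := congrArg (dotv w) hxy
    rw [dotv_add, dotv_add] at e1 e2
    have h1 := ha' x hx
    have h2 := hb' y hy
    exact ⟨eq_of_dotv hd (by omega) (by omega), eq_of_dotv hd (by omega) (by omega)⟩
  rw [Finsupp.mem_support_iff] at ha hb ⊢
  rw [AddMonoidAlgebra.coeff_mul_add_of_uniqueAdd hU]
  exact mul_ne_zero ha hb

lemma outer_edge_aux {R : Type*} [CommRing R] [IsDomain R] (g h : LP R)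
    (hg : 1 < g.coeff.support.card) (hh : h.coeff.support.Nonempty) (v : ℤ × ℤ) (hv : v ≠ 0)
    (c : ℤ) (hc : ∀ x ∈ g.coeff.support, dotv v x = c) :
    HasOuterEdge (g * h).coeff.support v := by
  classical
  have hpos : v.1 * v.1 + v.2 * v.2 ≠ 0 := by
    intro h0
    apply hv
    ext
    · simp only [Prod.fst_zero]; nlinarith [mul_self_nonneg v.1, mul_self_nonneg v.2]
    · simp only [Prod.snd_zero]; nlinarith [mul_self_nonneg v.1, mul_self_nonneg v.2]
  have hw (x) : dotv (v.2, -v.1) x = - dotv (-v.2, v.1) x := by simp only [dotv]; ring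
  have hd1 : v.1 * (-v.2, v.1).2 - v.2 * (-v.2, v.1).1 ≠ 0 := by
    intro h0; apply hpos; linear_combination h0
  have hd2 : v.1 * (v.2, -v.1).2 - v.2 * (v.2, -v.1).1 ≠ 0 := by
    intro h0; apply hpos; linear_combination -h0
  have hgn : g.coeff.support.Nonempty := Finset.card_pos.mp (by omega)
  obtain ⟨a, ha, ha'⟩ := exists_lex_min v (-v.2, v.1) _ hgn
  obtain ⟨b, hb, hb'⟩ := exists_lex_min v (-v.2, v.1) _ hh
  obtain ⟨p, hp, hp'⟩ := exists_lex_min v (v.2, -v.1) _ hgn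
  obtain ⟨q, hq, hq'⟩ := exists_lex_min v (v.2, -v.1) _ hh
  have m1 := corner g h v _ hd1 a b ha hb ha' hb'
  have m2 := corner g h v _ hd2 p q hp hq hp' hq'
  have hbq : dotv v b = dotv v q := by have := hb' q hq; have := hq' b hb; omega
  have key : dotv v (p + q) = dotv v (a + b) := by
    rw [dotv_add, dotv_add, hc p hp, hc a ha, hbq]
  have conv (x y : ℤ × ℤ) : (y.1 - x.1) * v.1 + (y.2 - x.2) * v.2 = dotv v y - dotv v x := by
    simp only [dotv]; ring
  refine ⟨a + b, m1, ?_, a + b, m1, p + q, m2, ?_, ?_, ?_⟩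
  · intro y hy
    rw [conv]
    obtain ⟨s, hs, t, ht, rfl⟩ := Finset.mem_add.mp (AddMonoidAlgebra.support_coeff_mul_subset g h hy)
    have := hc s hs
    have := hc a ha
    have := hb' t ht
    rw [dotv_add, dotv_add]; omega
  · intro heq
    have e := congrArg (dotv (-v.2, v.1)) heq
    rw [dotv_add, dotv_add] at e
    simp only [hw] at hp' hq'
    have := hb' q hq
    have := hq' b hb
    have := ha' p hp
    obtain ⟨s, hs, t, ht, hst⟩ := Finset.one_lt_card.mp hg
    apply hst
    have := ha' s hs
    have := ha' t ht
    have := hp' s hs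
    have := hp' t ht
    have := hc s hs
    have := hc t ht
    have := hc a ha
    have := hc p hp
    exact eq_of_dotv hd1 (by omega) (by omega)
  · rw [conv]; omega
  · rw [conv]; omega

/-- a line polynomial factor in direction u forces outer edges
perpendicular to v and −v, for v perpendicular to u. -/
theorem outer_edges_of_line_factor {R : Type*} [CommRing R] [IsDomain R] (f : LP R)
    (hf : f ≠ 0) (u : ℤ × ℤ) (hu : u ≠ 0) (g : LP R) (hg : IsLinePoly u g)
    (hdvd : g ∣ f) (v : ℤ × ℤ) (hv : v ≠ 0) (hperp : v.1 * u.1 + v.2 * u.2 = 0) :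
    HasOuterEdge f.coeff.support v ∧ HasOuterEdge f.coeff.support (-v) := by
  obtain ⟨h, rfl⟩ := hdvd
  obtain ⟨hcard, n, hn⟩ := hg
  have hh : h.coeff.support.Nonempty := by
    rw [Finset.nonempty_iff_ne_empty]
    intro h0
    apply hf
    have : h = 0 := by
      ext x
      have := Finsupp.support_eq_empty.mp h0
      simp [this]
    rw [this, mul_zero]
  have hc : ∀ x ∈ g.coeff.support, dotv v x = dotv v n := by
    intro x hx
    obtain ⟨r, h1, h2⟩ := hn x hx
    have hp : (v.1 : ℚ) * u.1 + v.2 * u.2 = 0 := by exact_mod_cast hperp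
    have : ((dotv v x : ℤ) : ℚ) = (dotv v n : ℤ) := by
      simp only [dotv]; push_cast
      rw [h1, h2]; linear_combination r * hp
    exact_mod_cast this
  refine ⟨outer_edge_aux g h hcard hh v hv _ hc,
    outer_edge_aux g h hcard hh (-v) (neg_ne_zero.mpr hv) (-dotv v n) ?_⟩
  intro x hx
  rw [← hc x hx]
  simp only [dotv, Prod.fst_neg, Prod.snd_neg]; ring
end

section
/- The Laurent polynomial f_L = 1 + X + Y over the field F₂ (the finitely supported function ℤ² → F₂ taking value 1 exactly at (0,0), (1,0) and (0,1)) has no line polynomial factors: there is no factorization f_L = g·h in the Laurent polynomial ring over F₂ in which g is a line polynomial. -/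
/-- If `g` has at least two terms, all on one level of the additive map `L`, then no nonzero
coefficient of `g * h` can be alone on its `L`-level. -/
lemma no_lonely_level (g h : LP (ZMod 2)) (L : ℤ × ℤ →+ ℤ) (c : ℤ)
    (hcard : 1 < g.coeff.support.card) (hc : ∀ m ∈ g.coeff.support, L m = c)
    (p : ℤ × ℤ) (hp : (g * h).coeff p ≠ 0)
    (huniq : ∀ q, (g * h).coeff q ≠ 0 → L q = L p → q = p) : False := by
  classical
  set B := h.coeff.support.filter (fun b => c + L b = L p) with hB
  have hBne : B.Nonempty := by
    by_contra hne
    apply hp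
    rw [AddMonoidAlgebra.coeff_mul]
    refine Finset.sum_eq_zero fun a ha => Finset.sum_eq_zero fun b hb => if_neg fun hab => hne ?_
    refine ⟨b, Finset.mem_filter.2 ⟨hb, ?_⟩⟩
    rw [← hc a ha, ← map_add, hab]
  have hlt : 1 < g.coeff.support.card * B.card :=
    lt_of_lt_of_le hcard (Nat.le_mul_of_pos_right _ hBne.card_pos)
  obtain ⟨p1, h1, p2, h2, hne, u1, u2⟩ := TwoUniqueSums.uniqueAdd_of_one_lt_card hlt
  have key : ∀ q ∈ g.coeff.support ×ˢ B, UniqueAdd g.coeff.support B q.1 q.2 →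
      q.1 + q.2 = p := by
    intro q hq hu
    obtain ⟨hq1, hq2⟩ := Finset.mem_product.1 hq
    obtain ⟨hq2, hq3⟩ := Finset.mem_filter.1 hq2
    have hL : L (q.1 + q.2) = L p := by rw [map_add, hc _ hq1, hq3]
    have hu' : UniqueAdd g.coeff.support h.coeff.support q.1 q.2 := by
      intro a b ha hb hab
      refine hu ha (Finset.mem_filter.2 ⟨hb, ?_⟩) hab
      rw [← hc a ha, ← map_add, hab, hL]
    refine huniq _ ?_ hL
    rw [AddMonoidAlgebra.coeff_mul_add_of_uniqueAdd hu']
    exact mul_ne_zero (Finsupp.mem_support_iff.1 hq1) (Finsupp.mem_support_iff.1 hq2)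
  have e := (key p1 h1 u1).trans (key p2 h2 u2).symm
  obtain ⟨ha, hb⟩ := u2 (Finset.mem_product.1 h1).1 (Finset.mem_product.1 h1).2 e
  exact hne (Prod.ext ha hb)

/-- f_L = 1 + X + Y over F₂ has no line polynomial factors. -/
theorem ledrappier_no_line_poly_factor :
    ¬ ∃ (g h : LP (ZMod 2)) (u : ℤ × ℤ), u ≠ 0 ∧ IsLinePoly u g ∧
      (AddMonoidAlgebra.single ((0:ℤ),(0:ℤ)) 1 + AddMonoidAlgebra.single ((1:ℤ),(0:ℤ)) 1 +
        AddMonoidAlgebra.single ((0:ℤ),(1:ℤ)) 1 : LP (ZMod 2)) = g * h := by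
  rintro ⟨g, h, u, hu, ⟨hcard, n, hn⟩, hf⟩
  let L : ℤ × ℤ →+ ℤ :=
    { toFun := fun m => m.1 * u.2 - m.2 * u.1
      map_zero' := by simp
      map_add' := by intro a b; simp only [Prod.fst_add, Prod.snd_add]; ring }
  have hLdef : ∀ m, L m = m.1 * u.2 - m.2 * u.1 := fun _ => rfl
  have hc : ∀ m ∈ g.coeff.support, L m = L n := by
    intro m hm
    obtain ⟨r, h1, h2⟩ := hn m hm
    rw [hLdef, hLdef]
    have : (m.1 : ℚ) * u.2 - m.2 * u.1 = n.1 * u.2 - n.2 * u.1 := by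
      rw [h1, h2]; ring
    exact_mod_cast this
  have hco : ∀ q, (g * h).coeff q ≠ 0 ↔ (q = (0, 0) ∨ q = (1, 0) ∨ q = (0, 1)) := by
    intro q
    rw [← hf]
    simp only [AddMonoidAlgebra.coeff_add, AddMonoidAlgebra.coeff_single, Finsupp.add_apply,
      Finsupp.single_apply]
    by_cases h0 : q = (0, 0)
    · subst h0; simp
    by_cases h1 : q = (1, 0)
    · subst h1; simp
    by_cases h2 : q = (0, 1)
    · subst h2; simp
    simp [h0, h1, h2, Ne.symm h0, Ne.symm h1, Ne.symm h2]
  have main : ∀ p, (p = ((0:ℤ), (0:ℤ)) ∨ p = (1, 0) ∨ p = (0, 1)) →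
      ¬ ∀ q, (q = ((0:ℤ), (0:ℤ)) ∨ q = (1, 0) ∨ q = (0, 1)) → L q = L p → q = p :=
    fun p hp hq => no_lonely_level g h L (L n) hcard hc p ((hco p).2 hp)
      fun q h1 h2 => hq q ((hco q).1 h1) h2
  have hu' : ¬ (u.1 = 0 ∧ u.2 = 0) := fun h => hu (Prod.ext h.1 h.2)
  by_cases ha : u.2 = 0
  · apply main (0, 1) (by simp)
    rintro q (rfl | rfl | rfl) <;> simp [hLdef] <;> omega
  by_cases hb : u.1 = 0
  · apply main (1, 0) (by simp)
    rintro q (rfl | rfl | rfl) <;> simp [hLdef] <;> omega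
  · apply main (0, 0) (by simp)
    rintro q (rfl | rfl | rfl) <;> simp [hLdef] <;> omega
end

section
/- Every low complexity configuration in the Ledrappier subshift is periodic: if c : ℤ² → F₂ satisfies c(i,j) + c(i+1,j) + c(i,j+1) = 0 for all (i,j) ∈ ℤ², and there is a finite nonempty D ⊆ ℤ² such that the number of distinct D-patterns of c is at most |D|, then c is periodic. -/
namespace LedNivat

/-- Shift operator. -/
def shift (M : Type) [AddCommGroup M] (t : ℤ × ℤ) : Module.End ℤ (ℤ × ℤ → M) where
  toFun e := fun n => e (n + t)
  map_add' _ _ := rfl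
  map_smul' _ _ := rfl

/-- Shift as a monoid hom. -/
def shiftHom (M : Type) [AddCommGroup M] : Multiplicative (ℤ × ℤ) →* Module.End ℤ (ℤ × ℤ → M) where
  toFun t := shift M t.toAdd
  map_one' := by ext e n; simp [shift]
  map_mul' a b := by
    ext e n
    simp only [shift, LinearMap.coe_mk, AddHom.coe_mk, Module.End.mul_apply, toAdd_mul]
    congr 1
    abel

/-- Action of Laurent polynomials on configurations. -/
noncomputable def act (M : Type) [AddCommGroup M] : LP ℤ →ₐ[ℤ] Module.End ℤ (ℤ × ℤ → M) :=
  AddMonoidAlgebra.lift ℤ _ _ (shiftHom M)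

/-- Monomial. -/
noncomputable def x (d : ℤ × ℤ) : LP ℤ := AddMonoidAlgebra.single d 1

lemma act_x (M : Type) [AddCommGroup M] (d : ℤ × ℤ) (e : ℤ × ℤ → M) (n : ℤ × ℤ) :
    act M (x d) e n = e (n + d) := by
  simp [act, x, shiftHom, shift]

lemma x_mul (a b : ℤ × ℤ) : x a * x b = x (a + b) := by
  simp [x, AddMonoidAlgebra.single_mul_single]

lemma x_pow (a : ℤ × ℤ) (n : ℕ) : x a ^ n = x (n • a) := by
  simp [x, AddMonoidAlgebra.single_pow]

lemma x_zero : x 0 = 1 := rfl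

lemma act_mul (M : Type) [AddCommGroup M] (f g : LP ℤ) (e : ℤ × ℤ → M) :
    act M (f * g) e = act M f (act M g e) := by
  rw [map_mul]; rfl

lemma act_sub (M : Type) [AddCommGroup M] (f g : LP ℤ) (e : ℤ × ℤ → M) :
    act M (f - g) e = act M f e - act M g e := by
  rw [map_sub]; rfl

lemma act_add (M : Type) [AddCommGroup M] (f g : LP ℤ) (e : ℤ × ℤ → M) :
    act M (f + g) e = act M f e + act M g e := by
  rw [map_add]; rfl

lemma act_smul (M : Type) [AddCommGroup M] (a : ℤ) (g : LP ℤ) (e : ℤ × ℤ → M) :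
    act M (a • g) e = a • act M g e := by
  rw [map_smul]; rfl

lemma act_one (M : Type) [AddCommGroup M] (e : ℤ × ℤ → M) :
    act M 1 e = e := by
  rw [map_one]; rfl

lemma act_sum (M : Type) [AddCommGroup M] {ι : Type*} (S : Finset ι) (f : ι → LP ℤ)
    (e : ℤ × ℤ → M) : act M (∑ i ∈ S, f i) e = ∑ i ∈ S, act M (f i) e := by
  rw [map_sum, LinearMap.sum_apply]

lemma act_cast (f : LP ℤ) (e : ℤ × ℤ → ℤ) :
    act (ZMod 2) f (fun n => (e n : ZMod 2)) = fun n => ((act ℤ f e n : ℤ) : ZMod 2) := by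
  induction f using AddMonoidAlgebra.induction_on with
  | of m =>
    funext n
    have : AddMonoidAlgebra.of ℤ (ℤ × ℤ) (Multiplicative.ofAdd m) = x m := rfl
    rw [this, act_x, act_x]
  | add f g hf hg => rw [act_add, act_add, hf, hg]; funext n; simp
  | smul r f hf => rw [act_smul, act_smul, hf]; funext n; simp

/-! ### Frobenius step -/

/-- The polynomial with exponents multiplied by `k`. -/
noncomputable def F (S : Finset (ℤ × ℤ)) (a : ℤ × ℤ → ℤ) (k : ℕ) : LP ℤ :=
  ∑ d ∈ S, a d • x (k • d)

lemma sum_pow_prime {R : Type*} [CommRing R] {ι : Type*} {p : ℕ} (hp : p.Prime)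
    (S : Finset ι) (f : ι → R) : ∃ r, (∑ i ∈ S, f i) ^ p = ∑ i ∈ S, f i ^ p + (p : R) * r := by
  classical
  induction S using Finset.induction_on with
  | empty => exact ⟨0, by simp [hp.ne_zero]⟩
  | insert i S hi ih =>
    obtain ⟨r, hr⟩ := ih
    obtain ⟨s, hs⟩ := exists_add_pow_prime_eq hp (f i) (∑ i ∈ S, f i)
    refine ⟨r + f i * (∑ i ∈ S, f i) * s, ?_⟩
    rw [Finset.sum_insert hi, Finset.sum_insert hi, hs, hr]
    ring

lemma int_pow_prime {p : ℕ} (hp : p.Prime) (a : ℤ) : ∃ b : ℤ, a ^ p = a + p * b := by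
  have := Fact.mk hp
  have : ((a ^ p - a : ℤ) : ZMod p) = 0 := by simp [ZMod.pow_card]
  obtain ⟨b, hb⟩ := (ZMod.intCast_zmod_eq_zero_iff_dvd _ p).1 this
  exact ⟨b, by linarith⟩

lemma F_pow {p : ℕ} (hp : p.Prime) (S : Finset (ℤ × ℤ)) (a : ℤ × ℤ → ℤ) (k : ℕ) :
    ∃ r, F S a k ^ p = F S a (p * k) + (p : LP ℤ) * r := by
  obtain ⟨r, hr⟩ := sum_pow_prime hp S (fun d => a d • x (k • d))
  choose b hb using int_pow_prime hp
  refine ⟨r + ∑ d ∈ S, b (a d) • x ((p * k) • d), ?_⟩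
  rw [F, hr, F, mul_add, Finset.mul_sum, add_comm (_ * r), ← add_assoc, ← Finset.sum_add_distrib]
  congr 1
  refine Finset.sum_congr rfl fun d _ => ?_
  rw [smul_pow, hb, x_pow, smul_smul, add_smul, mul_smul (p : ℤ), natCast_zsmul]
  congr 1
  exact nsmul_eq_mul _ _

lemma F_bound (S : Finset (ℤ × ℤ)) (a : ℤ × ℤ → ℤ) (k : ℕ) (c : ℤ × ℤ → ℤ)
    (hc : ∀ n, |c n| ≤ 1) (n : ℤ × ℤ) : |act ℤ (F S a k) c n| ≤ ∑ d ∈ S, |a d| := by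
  rw [F, act_sum, Finset.sum_apply]
  refine (Finset.abs_sum_le_sum_abs _ _).trans (Finset.sum_le_sum fun d _ => ?_)
  rw [act_smul, Pi.smul_apply, act_x, smul_eq_mul, abs_mul]
  exact mul_le_of_le_one_right (abs_nonneg _) (hc _)

lemma F_step (S : Finset (ℤ × ℤ)) (a : ℤ × ℤ → ℤ) (c : ℤ × ℤ → ℤ)
    (hc : ∀ n, |c n| ≤ 1) (p k : ℕ) (hp : p.Prime) (hB : ∑ d ∈ S, |a d| < p)
    (h : act ℤ (F S a k) c = 0) : act ℤ (F S a (p * k)) c = 0 := by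
  obtain ⟨r, hr⟩ := F_pow hp S a k
  have h1 : act ℤ (F S a k ^ p) c = 0 := by
    obtain ⟨q, rfl⟩ := Nat.exists_eq_succ_of_ne_zero hp.ne_zero
    rw [pow_succ, act_mul, h, map_zero]
  rw [hr, act_add] at h1
  funext n
  have h2 := congrFun h1 n
  have h3 : act ℤ ((p : LP ℤ) * r) c n = p * act ℤ r c n := by
    rw [← nsmul_eq_mul, ← natCast_zsmul, act_smul]; simp
  rw [Pi.add_apply, h3, Pi.zero_apply] at h2
  have h4 := F_bound S a (p * k) c hc n
  apply Int.eq_zero_of_abs_lt_dvd (m := (p : ℤ)) _ (h4.trans_lt hB)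
  exact ⟨-act ℤ r c n, by linarith⟩

lemma F_all (S : Finset (ℤ × ℤ)) (a : ℤ × ℤ → ℤ) (c : ℤ × ℤ → ℤ)
    (hc : ∀ n, |c n| ≤ 1) (h : act ℤ (F S a 1) c = 0) (k : ℕ) (hk0 : k ≠ 0)
    (hk : ∀ p : ℕ, p.Prime → p ∣ k → ∑ d ∈ S, |a d| < p) : act ℤ (F S a k) c = 0 := by
  induction k using induction_on_primes with
  | zero => exact absurd rfl hk0
  | one => exact h
  | prime_mul p k hp ih =>
    have hk0' : k ≠ 0 := by rintro rfl; simp at hk0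
    exact F_step S a c hc p k hp (hk p hp (Dvd.intro _ rfl))
      (ih hk0' fun q hq hqk => hk q hq (hqk.mul_left p))

lemma exists_M (S : Finset (ℤ × ℤ)) (a : ℤ × ℤ → ℤ) (c : ℤ × ℤ → ℤ)
    (hc : ∀ n, |c n| ≤ 1) (h : act ℤ (F S a 1) c = 0) :
    ∃ M : ℕ, 0 < M ∧ ∀ i : ℕ, act ℤ (F S a (1 + i * M)) c = 0 := by
  refine ⟨(∑ d ∈ S, |a d|).toNat.factorial, Nat.factorial_pos _, fun i => ?_⟩
  refine F_all S a c hc h _ (by omega) fun p hp hpd => ?_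
  by_contra hlt
  have hle : p ≤ (∑ d ∈ S, |a d|).toNat := by omega
  have : p ∣ 1 := (Nat.dvd_add_left ((Nat.dvd_factorial hp.pos hle).mul_left i)).1 hpd
  exact hp.one_lt.ne' (Nat.dvd_one.1 this)

/-- The Vandermonde trick. -/
lemma vandermonde (S : Finset (ℤ × ℤ)) (a : ℤ × ℤ → ℤ) (c : ℤ × ℤ → ℤ) (M : ℕ)
    (h : ∀ i : ℕ, act ℤ (F S a (1 + i * M)) c = 0) (d₀ : ℤ × ℤ) (hd : d₀ ∈ S) (ha : a d₀ ≠ 0) :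
    act ℤ (∏ d ∈ S.erase d₀, (x (M • d₀) - x (M • d))) c = 0 := by
  classical
  set q : Polynomial (LP ℤ) := ∏ d ∈ S.erase d₀, (Polynomial.X - Polynomial.C (x (M • d))) with hq
  have hev : ∀ e, q.eval (x (M • e)) = ∏ d ∈ S.erase d₀, (x (M • e) - x (M • d)) := by
    intro e; rw [hq, Polynomial.eval_prod]; simp
  have key : ∑ i ∈ Finset.range (q.natDegree + 1), q.coeff i * F S a (1 + i * M)
      = a d₀ • (x d₀ * ∏ d ∈ S.erase d₀, (x (M • d₀) - x (M • d))) := by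
    have h1 : ∀ i, q.coeff i * F S a (1 + i * M)
        = ∑ d ∈ S, a d • (x d * (q.coeff i * x (M • d) ^ i)) := by
      intro i
      rw [F, Finset.mul_sum]
      refine Finset.sum_congr rfl fun d _ => ?_
      rw [x_pow, mul_smul_comm, mul_left_comm, x_mul, add_smul, one_smul, mul_smul]
    simp_rw [h1]
    rw [Finset.sum_comm, Finset.sum_eq_single d₀]
    · rw [← Finset.smul_sum, ← Finset.mul_sum, ← Polynomial.eval_eq_sum_range, hev]
    · intro d hdS hne
      rw [← Finset.smul_sum, ← Finset.mul_sum, ← Polynomial.eval_eq_sum_range, hev,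
        Finset.prod_eq_zero (f := fun d' => x (M • d) - x (M • d'))
          (Finset.mem_erase.2 ⟨hne, hdS⟩) (sub_self _), mul_zero, smul_zero]
    · exact fun h => absurd hd h
  have h2 : act ℤ (a d₀ • (x d₀ * ∏ d ∈ S.erase d₀, (x (M • d₀) - x (M • d)))) c = 0 := by
    rw [← key, act_sum]
    refine Finset.sum_eq_zero fun i _ => ?_
    rw [act_mul, h, map_zero]
  rw [act_smul, act_mul] at h2
  funext n
  have h3 := congrFun h2 (n - d₀)
  rw [Pi.smul_apply, act_x, sub_add_cancel, smul_eq_mul] at h3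
  simpa [ha] using h3

/-! ### Ledrappier part -/

/-- Membership in the Ledrappier subshift. -/
def Led (e : ℤ × ℤ → ZMod 2) : Prop := act (ZMod 2) (1 + x (1, 0) + x (0, 1)) e = 0

lemma Led.act {e : ℤ × ℤ → ZMod 2} (he : Led e) (f : LP ℤ) : Led (act (ZMod 2) f e) := by
  rw [Led, ← act_mul, mul_comm, act_mul, he, map_zero]

/-- Horizontally periodic. -/
def HP (e : ℤ × ℤ → ZMod 2) : Prop := ∃ N : ℕ, 0 < N ∧ act (ZMod 2) (x (1, 0) ^ N) e = e

/-- Horizontal shift, linear over `ZMod 2`. -/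
def sx : Module.End (ZMod 2) (ℤ × ℤ → ZMod 2) where
  toFun e := fun n => e (n + (1, 0))
  map_add' _ _ := rfl
  map_smul' _ _ := rfl

lemma sx_pow (k : ℕ) (e : ℤ × ℤ → ZMod 2) : (sx ^ k) e = act (ZMod 2) (x (1, 0) ^ k) e := by
  induction k with
  | zero => simp
  | succ k ih => rw [pow_succ', pow_succ', act_mul, Module.End.mul_apply, ih]; funext n
                 rw [act_x]; rfl

lemma HP_of_poly (e : ℤ × ℤ → ZMod 2) (p : Polynomial (ZMod 2)) (hp : p ≠ 0)
    (h : Polynomial.aeval sx p e = 0) : HP e := by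
  have : Module.Finite (ZMod 2) (AdjoinRoot p) := (AdjoinRoot.powerBasis hp).finite
  have : Finite (AdjoinRoot p) := Module.finite_of_finite (ZMod 2)
  have key : ∃ m n : ℕ, m < n ∧ AdjoinRoot.root p ^ m = AdjoinRoot.root p ^ n := by
    obtain ⟨m, n, hne, heq⟩ := Finite.exists_ne_map_eq_of_infinite
      (fun n : ℕ => AdjoinRoot.root p ^ n)
    rcases lt_or_gt_of_ne hne with h | h
    · exact ⟨m, n, h, heq⟩
    · exact ⟨n, m, h, heq.symm⟩
  obtain ⟨m, n, hmn, heq⟩ := key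
  have hdvd : p ∣ Polynomial.X ^ m - Polynomial.X ^ n := by
    rw [← AdjoinRoot.mk_eq_zero]
    simp [heq]
  obtain ⟨q, hq⟩ := hdvd
  have h1 : Polynomial.aeval sx (Polynomial.X ^ m - Polynomial.X ^ n : Polynomial (ZMod 2)) e = 0 := by
    rw [hq, mul_comm, map_mul, Module.End.mul_apply, h, map_zero]
  rw [map_sub, LinearMap.sub_apply, map_pow, map_pow, Polynomial.aeval_X, sx_pow, sx_pow,
    x_pow, x_pow] at h1
  refine ⟨n - m, by omega, ?_⟩
  funext t
  have h2 := congrFun h1 (t - m • (1, 0))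
  rw [Pi.sub_apply, act_x, act_x, Pi.zero_apply, sub_add_cancel] at h2
  rw [x_pow, act_x]
  rw [sub_eq_zero] at h2
  rw [h2]
  congr 1
  obtain ⟨k, rfl⟩ := Nat.exists_eq_add_of_lt hmn
  rw [show m + k + 1 - m = k + 1 by omega, add_assoc, add_smul m]
  abel

lemma led_y {e : ℤ × ℤ → ZMod 2} (he : Led e) (b : ℕ) :
    act (ZMod 2) (x (0, 1) ^ b) e = Polynomial.aeval sx ((1 + Polynomial.X) ^ b : Polynomial (ZMod 2)) e := by
  have two : ∀ z : ℤ × ℤ → ZMod 2, z + z = 0 := fun z => by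
    funext n; exact CharTwo.add_self_eq_zero _
  induction b generalizing e with
  | zero => simp
  | succ b ih =>
    have h1 : act (ZMod 2) (x (0, 1)) e = e + sx e := by
      have := he
      rw [Led, act_add, act_add, act_one] at this
      have hs : sx e = act (ZMod 2) (x (1, 0)) e := by funext n; rw [act_x]; rfl
      rw [hs]
      rw [← sub_eq_zero, ← this, sub_eq_iff_eq_add]
      rw [add_right_comm, two, zero_add]
    rw [pow_succ, act_mul, ih (he.act _), h1, pow_succ, map_mul, Module.End.mul_apply]
    simp

lemma HP_of_period_nonneg {e : ℤ × ℤ → ZMod 2} (he : Led e) (a : ℤ) (b : ℕ) (hv : (a, (b : ℤ)) ≠ 0)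
    (h : ∀ n, e (n + (a, (b : ℤ))) = e n) : HP e := by
  rcases Nat.eq_zero_or_pos b with rfl | hb
  · have ha : a ≠ 0 := by rintro rfl; simp at hv
    refine ⟨a.natAbs, by omega, ?_⟩
    funext n
    rw [x_pow, act_x]
    rcases le_total 0 a with h0 | h0
    · rw [← h n]; congr 2; simp [Prod.ext_iff, abs_of_nonneg h0]
    · rw [← h (n + _)]; congr 1; ext <;> simp [abs_of_nonpos h0]
  · obtain ⟨a₁, a₂, rfl⟩ : ∃ a₁ a₂ : ℕ, a = (a₁ : ℤ) - a₂ := ⟨a.toNat, (-a).toNat, by omega⟩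
    apply HP_of_poly e (Polynomial.X ^ a₁ * (1 + Polynomial.X) ^ b - Polynomial.X ^ a₂)
    · intro h0
      have := congrArg (Polynomial.eval 1) h0
      simp [CharTwo.add_self_eq_zero, hb.ne'] at this
    · rw [map_sub, LinearMap.sub_apply, map_mul, Module.End.mul_apply, ← led_y he]
      rw [Polynomial.aeval_X_pow, Polynomial.aeval_X_pow, sx_pow, sx_pow, ← act_mul, x_pow, x_pow, x_pow,
        x_mul]
      funext n
      rw [Pi.sub_apply, act_x, act_x, Pi.zero_apply, sub_eq_zero]
      rw [← h (n + a₂ • (1, 0))]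
      congr 1
      ext <;> simp

lemma HP_of_period {e : ℤ × ℤ → ZMod 2} (he : Led e) (v : ℤ × ℤ) (hv : v ≠ 0)
    (h : ∀ n, e (n + v) = e n) : HP e := by
  obtain ⟨a, b⟩ := v
  obtain ⟨k, rfl | rfl⟩ := Int.eq_nat_or_neg b
  · exact HP_of_period_nonneg he a k hv h
  · apply HP_of_period_nonneg he (-a) k
    · intro h0; apply hv; simpa [Prod.ext_iff] using h0
    · intro n
      rw [← h]
      congr 1
      ext <;> simp

lemma HP_of_prod {ι : Type*} (S : Finset ι) (s t : ι → ℤ × ℤ) (hst : ∀ i ∈ S, s i ≠ t i)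
    (e : ℤ × ℤ → ZMod 2) (he : Led e) (h : act (ZMod 2) (∏ i ∈ S, (x (s i) - x (t i))) e = 0) :
    HP e := by
  classical
  induction S using Finset.induction_on generalizing e with
  | empty => exact ⟨1, one_pos, by rw [Finset.prod_empty, act_one] at h; rw [h, map_zero]⟩
  | insert i S hi ih =>
    rw [Finset.prod_insert hi, mul_comm, act_mul] at h
    obtain ⟨N, hN, hN'⟩ := ih (fun j hj => hst j (Finset.mem_insert_of_mem hj)) _ (he.act _) h
    have h1 : act (ZMod 2) (x (s i) - x (t i)) (act (ZMod 2) (x (1, 0) ^ N - 1) e) = 0 := by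
      rw [← act_mul, mul_comm, act_mul, act_sub, hN', act_one, sub_self]
    obtain ⟨K, hK, hK'⟩ := HP_of_period (he.act (x (1, 0) ^ N - 1)) (s i - t i)
      (sub_ne_zero.2 (hst i (Finset.mem_insert_self _ _))) (by
        intro n
        have := congrFun h1 (n - t i)
        rw [act_sub, Pi.sub_apply, act_x, act_x, sub_add_cancel, Pi.zero_apply, sub_eq_zero] at this
        rw [← this, sub_add_eq_add_sub, add_sub_assoc])
    have h2 : act (ZMod 2) ((x (1, 0) ^ K - 1) * (x (1, 0) ^ N - 1)) e = 0 := by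
      rw [act_mul, act_sub, hK', act_one, sub_self]
    refine ⟨2 * (N * K), by positivity, ?_⟩
    obtain ⟨f, hf⟩ : (x (1, 0) ^ K - 1) * (x (1, 0) ^ N - 1) ∣
        (x (1, 0) ^ (N * K) - 1) * (x (1, 0) ^ (N * K) - 1) := by
      apply mul_dvd_mul
      · rw [mul_comm N K, pow_mul]; exact sub_one_dvd_pow_sub_one _ _
      · rw [pow_mul]; exact sub_one_dvd_pow_sub_one _ _
    have h3 : act (ZMod 2) ((x (1, 0) ^ (N * K) - 1) * (x (1, 0) ^ (N * K) - 1)) e = 0 := by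
      rw [hf, mul_comm, act_mul, h2, map_zero]
    have h4 : x (1, 0) ^ (2 * (N * K)) = (x (1, 0) ^ (N * K) - 1) * (x (1, 0) ^ (N * K) - 1)
        + ((2 : ℤ) • (x (1, 0) ^ (N * K) - 1) + 1) := by
      rw [two_mul, pow_add, two_smul]; ring
    rw [h4, act_add, h3, zero_add, act_add, act_smul, act_one, two_smul]
    funext n
    simp [CharTwo.add_self_eq_zero]

/-! ### Linear algebra -/

lemma exists_relation (c : ℤ × ℤ → ZMod 2) (h : LowComplexity c) :
    ∃ (D : Finset (ℤ × ℤ)) (a : ℤ × ℤ → ℤ) (a₀ : ℤ), (∃ d ∈ D, a d ≠ 0) ∧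
      ∀ n, a₀ + ∑ d ∈ D, a d * ((c (n + d)).val : ℤ) = 0 := by
  classical
  obtain ⟨D, -, hD⟩ := h
  haveI : Fintype (Patterns c D) := Fintype.ofFinite _
  let φ : (Option D → ℤ) →ₗ[ℤ] (Patterns c D → ℤ) :=
    { toFun := fun a p => a none + ∑ d : D, a (some d) * ((p.1 d).val : ℤ)
      map_add' := fun a b => by
        funext p; simp only [Pi.add_apply, add_mul, Finset.sum_add_distrib]; ring
      map_smul' := fun r a => by
        funext p
        simp only [Pi.smul_apply, smul_eq_mul, RingHom.id_apply, mul_add, Finset.mul_sum, mul_assoc] }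
  have hni : ¬ Function.Injective φ := by
    intro hinj
    have := card_le_of_injective ℤ φ hinj
    rw [Fintype.card_option, Fintype.card_coe, ← Nat.card_eq_fintype_card,
      Nat.card_coe_set_eq] at this
    omega
  rw [injective_iff_map_eq_zero] at hni
  push Not at hni
  obtain ⟨a, ha, hne⟩ := hni
  have hrel : ∀ n, a none + ∑ d : D, a (some d) * ((c (n + d.1)).val : ℤ) = 0 := fun n =>
    congrFun ha ⟨_, n, rfl⟩
  refine ⟨D, fun d => if hd : d ∈ D then a (some ⟨d, hd⟩) else 0, a none, ?_, ?_⟩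
  · by_contra hcon
    push Not at hcon
    have h1 : ∀ d : D, a (some d) = 0 := fun d => by simpa using hcon d.1 d.2
    apply hne
    funext o
    cases o with
    | none => simpa [h1] using hrel 0
    | some d => exact h1 d
  · intro n
    rw [← Finset.sum_coe_sort D, ← hrel n]
    simp

lemma exists_annihilator (c : ℤ × ℤ → ZMod 2) (h : LowComplexity c) :
    ∃ f : LP ℤ, f ≠ 0 ∧ act ℤ f (fun n => ((c n).val : ℤ)) = 0 := by
  obtain ⟨D, a, a₀, ⟨d, hd, had⟩, hrel⟩ := exists_relation c h
  set g := F D a 1 with hg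
  have hg0 : g ≠ 0 := by
    intro h0
    apply had
    have := congrArg (fun f : LP ℤ => f.coeff d) h0
    simpa [hg, F, x, AddMonoidAlgebra.coeff_sum, Finsupp.single_apply, hd] using this
  have hu : x (1, 0) - 1 ≠ 0 := by
    rw [← x_zero, sub_ne_zero]
    intro h0
    have := (AddMonoidAlgebra.single_left_inj (one_ne_zero (α := ℤ))).1 h0
    simp [Prod.ext_iff] at this
  refine ⟨(x (1, 0) - 1) * g, mul_ne_zero hu hg0, ?_⟩
  have hgc : act ℤ g (fun n => ((c n).val : ℤ)) = fun _ => -a₀ := by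
    funext n
    rw [hg, F, act_sum, Finset.sum_apply, eq_neg_iff_add_eq_zero, ← hrel n, add_comm]
    congr 1
    refine Finset.sum_congr rfl fun d _ => ?_
    rw [act_smul, Pi.smul_apply, act_x, one_smul, smul_eq_mul]
  rw [act_mul, hgc, act_sub, act_one]
  funext n
  rw [Pi.sub_apply, act_x]
  simp

end LedNivat

/-- every low complexity configuration in the Ledrappier subshift is periodic. -/
theorem ledrappier_nivat (c : ℤ × ℤ → ZMod 2)
    (hc : ∀ i j : ℤ, c (i, j) + c (i + 1, j) + c (i, j + 1) = 0)
    (hlc : LowComplexity c) : Periodic c := by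
  obtain ⟨f, hf0, hf⟩ := LedNivat.exists_annihilator c hlc
  have hF : f = LedNivat.F f.coeff.support f.coeff 1 := by
    conv_lhs => rw [← AddMonoidAlgebra.sum_coeff_single f]
    rw [LedNivat.F, Finsupp.sum]
    refine Finset.sum_congr rfl fun d _ => ?_
    simp [LedNivat.x, AddMonoidAlgebra.smul_single]
  have hne : f.coeff.support.Nonempty := by
    rw [Finsupp.support_nonempty_iff]
    simpa using hf0
  obtain ⟨d₀, hd₀⟩ := hne
  have hb : ∀ n, |((c n).val : ℤ)| ≤ 1 := by
    intro n
    have := ZMod.val_lt (c n)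
    rw [abs_of_nonneg (by positivity)]
    omega
  rw [hF] at hf
  obtain ⟨M, hM, hk⟩ := LedNivat.exists_M _ _ _ hb hf
  have hv := LedNivat.vandermonde _ _ _ M hk d₀ hd₀ (Finsupp.mem_support_iff.1 hd₀)
  have hc2 : (fun n => ((((c n).val : ℤ) : ℤ) : ZMod 2)) = c := by
    funext n; simp
  have hv2 := LedNivat.act_cast
    (∏ d ∈ f.coeff.support.erase d₀, (LedNivat.x (M • d₀) - LedNivat.x (M • d)))
    (fun n => ((c n).val : ℤ))
  rw [hv, hc2] at hv2
  have hL : LedNivat.Led c := by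
    rw [LedNivat.Led, LedNivat.act_add, LedNivat.act_add, LedNivat.act_one]
    funext n
    obtain ⟨i, j⟩ := n
    simpa [LedNivat.act_x] using hc i j
  obtain ⟨N, hN, hN'⟩ := LedNivat.HP_of_prod (f.coeff.support.erase d₀) (fun _ => M • d₀) (fun d => M • d) (by
    intro d hd heq
    exact (Finset.mem_erase.1 hd).1 (smul_right_injective _ hM.ne' heq).symm) c hL (by
      rw [hv2]; funext n; simp)
  refine ⟨N • (1, 0), ?_, fun n => ?_⟩
  · simp [Prod.ext_iff, hN.ne']
  · have := congrFun hN' n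
    rwa [LedNivat.x_pow, LedNivat.act_x] at this
end

section
/- Let c : ℤ² → F₂ satisfy c(i,j) + c(i+1,j) + c(i,j+1) = 0 for all (i,j) ∈ ℤ², and let c' : ℤ² → ℤ be the configuration obtained by renaming 0_{F₂} ↦ 0 and 1_{F₂} ↦ 1. If some nonzero Laurent polynomial over ℤ annihilates c', then c is periodic. -/
def shiftHom (R : Type*) [CommRing R] : Multiplicative (ℤ × ℤ) →* Module.End R (ℤ × ℤ → R) where
  toFun m := LinearMap.funLeft R R (fun n => n - m.toAdd)
  map_one' := by ext; simp [LinearMap.funLeft]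
  map_mul' a b := by ext f n; simp [LinearMap.funLeft_apply, sub_sub]

theorem frob (q : ℕ) [Fact q.Prime] (s : Finset (ℤ × ℤ)) (F c : ℤ × ℤ → ℤ)
    (h : ∀ n, ∑ m ∈ s, F m * c (n - m) = 0) (n : ℤ × ℤ) :
    (q : ℤ) ∣ ∑ m ∈ s, F m * c (n - q • m) := by
  set φ := AddMonoidAlgebra.lift (ZMod q) (Module.End (ZMod q) (ℤ × ℤ → ZMod q)) (ℤ × ℤ) (shiftHom (ZMod q))
  set P : AddMonoidAlgebra (ZMod q) (ℤ × ℤ) := ∑ m ∈ s, AddMonoidAlgebra.single m (F m : ZMod q) with hP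
  set C : ℤ × ℤ → ZMod q := fun n => (c n : ZMod q) with hC
  have h1 : φ P C = 0 := by
    ext n
    have := congrArg (Int.cast : ℤ → ZMod q) (h n)
    simpa [hP, φ, AddMonoidAlgebra.lift_single, shiftHom, LinearMap.funLeft_apply] using this
  have : CharP (AddMonoidAlgebra (ZMod q) (ℤ×ℤ)) q := 
    charP_of_injective_algebraMap (R := ZMod q) (FaithfulSMul.algebraMap_injective _ _) q
  have h2 : P ^ q = ∑ m ∈ s, AddMonoidAlgebra.single (q • m) (F m : ZMod q) := by
    rw [hP, sum_pow_char]
    simp [AddMonoidAlgebra.single_pow, ZMod.pow_card]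
  have h3 : φ (P ^ q) C = 0 := by
    obtain ⟨k, hk⟩ : ∃ k, q = k + 1 := ⟨q - 1, by have := (Fact.out : q.Prime).pos; omega⟩
    have : P ^ q = P ^ (q - 1) * P := by rw [← pow_succ]; congr 1; omega
    rw [this, map_mul, Module.End.mul_apply, h1, map_zero]
  rw [h2] at h3
  have h4 := congrFun h3 n
  rw [← ZMod.intCast_zmod_eq_zero_iff_dvd]
  simpa [φ, AddMonoidAlgebra.lift_single, shiftHom, LinearMap.funLeft_apply] using h4

open Polynomial in
theorem bivar_ne_zero_aux (K : Type*) [Field K] [IsAlgClosed K] [CharP K 2] [Algebra (ZMod 2) K]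
    {ι : Type*} (s : Finset ι) (f : ι → ZMod 2) (u v : ι → ℕ)
    (hinj : ∀ a ∈ s, ∀ b ∈ s, u a = u b → v a = v b → a = b)
    (q : ℕ) (hq : Odd q) (hv : ∀ m ∈ s, v m < q) (m₀ : ι) (hm₀ : m₀ ∈ s) (hf : f m₀ ≠ 0) :
    ∑ m ∈ s, C (f m) * X ^ (q * u m) * (1 + X) ^ (q * v m) ≠ (0 : (ZMod 2)[X]) := by
  intro h0
  have hqK : (q : K) = 1 := by
    obtain ⟨k, rfl⟩ := hq
    have : (2 : K) = 0 := by exact_mod_cast CharP.cast_eq_zero K 2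
    push_cast
    rw [this]; ring
  have hq0 : 0 < q := hq.pos
  have : NeZero (q : K) := ⟨by rw [hqK]; exact one_ne_zero⟩
  obtain ⟨ζ, hζ⟩ := HasEnoughRootsOfUnity.exists_primitiveRoot K q
  let i : ZMod 2 →+* K := algebraMap (ZMod 2) K
  let P : K[X][X] := ∑ m ∈ s, monomial (v m) (C (i (f m)) * X ^ (q * u m))
  have hroot : ∀ k : Fin q, eval ((1 + C (ζ ^ (k : ℕ)) * X) ^ q : K[X]) P = 0 := by
    intro k
    have h1 := congrArg (fun p => (p.map i).comp (C (ζ ^ (k : ℕ)) * X)) h0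
    simp only [Polynomial.map_sum, Polynomial.map_mul, Polynomial.map_pow, Polynomial.map_add,
      Polynomial.map_one, map_X, map_C, Polynomial.map_zero, zero_comp, Polynomial.sum_comp, mul_comp,
      pow_comp, add_comp, one_comp, X_comp, C_comp] at h1
    rw [← h1, eval_finsetSum]
    refine Finset.sum_congr rfl fun m _ => ?_
    rw [eval_monomial, ← pow_mul, mul_pow, ← C_pow]
    have : (ζ ^ (k : ℕ)) ^ (q * u m) = 1 := by
      rw [← pow_mul, show (k : ℕ) * (q * u m) = q * (k * u m) by ring, pow_mul, hζ.pow_eq_one,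
        one_pow]
    rw [this]; simp
  have hinj' : Function.Injective (fun k : Fin q => ((1 + C (ζ ^ (k : ℕ)) * X) ^ q : K[X])) := by
    intro a b hab
    have h1 := congrArg (fun p => eval 0 (derivative p)) hab
    simp [derivative_pow, hqK] at h1
    exact Fin.ext (hζ.pow_inj a.2 b.2 h1)
  have hdeg : P.natDegree < Fintype.card (Fin q) := by
    rw [Fintype.card_fin]
    have : P.natDegree ≤ q - 1 := by
      refine natDegree_sum_le_of_forall_le _ _ fun m hm => ?_
      refine (natDegree_monomial_le _).trans ?_
      have := hv m hm
      omega
    omega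
  have hP : P = 0 := eq_zero_of_natDegree_lt_card_of_eval_eq_zero P hinj' hroot hdeg
  have h2 := congrArg (fun p => (p.coeff (v m₀)).coeff (q * u m₀)) hP
  simp only [P, finsetSum_coeff, coeff_monomial, coeff_zero] at h2
  rw [Finset.sum_eq_single m₀] at h2
  · simp at h2
    exact hf h2
  · intro m hm hne
    split_ifs with hvm
    · rw [coeff_C_mul, coeff_X_pow, if_neg, mul_zero]
      intro hu
      exact hne (hinj m hm m₀ hm₀ (Nat.eq_of_mul_eq_mul_left hq0 hu).symm hvm)
    · simp
  · exact fun h => (h hm₀).elim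

open Polynomial in
theorem bivar_ne_zero {ι : Type*} (s : Finset ι) (f : ι → ZMod 2) (u v : ι → ℕ)
    (hinj : ∀ a ∈ s, ∀ b ∈ s, u a = u b → v a = v b → a = b)
    (q : ℕ) (hq : Odd q) (hv : ∀ m ∈ s, v m < q) (m₀ : ι) (hm₀ : m₀ ∈ s) (hf : f m₀ ≠ 0) :
    ∑ m ∈ s, C (f m) * X ^ (q * u m) * (1 + X) ^ (q * v m) ≠ (0 : (ZMod 2)[X]) :=
  bivar_ne_zero_aux (AlgebraicClosure (ZMod 2)) s f u v hinj q hq hv m₀ hm₀ hf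

open Polynomial in
theorem periodic_of_poly (c : ℤ × ℤ → ZMod 2) (S : Module.End (ZMod 2) (ℤ × ℤ → ZMod 2))
    (hS : ∀ (d : ℤ × ℤ → ZMod 2) (k : ℕ) (n : ℤ × ℤ), (S ^ k) d n = d (n + ((k : ℤ), 0)))
    (G : (ZMod 2)[X]) (hG : G ≠ 0) (h : aeval S G c = 0) : Periodic c := by
  have : Fact (Nat.Prime 2) := ⟨Nat.prime_two⟩
  have : Module.Finite (ZMod 2) (AdjoinRoot G) := (AdjoinRoot.powerBasis hG).finite
  have : Finite (AdjoinRoot G) := Module.finite_of_finite (ZMod 2)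
  obtain ⟨a, b, hab, he⟩ := Finite.exists_ne_map_eq_of_infinite
    (fun n : ℕ => AdjoinRoot.mk G (X ^ n))
  obtain ⟨H, hH⟩ := AdjoinRoot.mk_eq_mk.1 he
  have h1 : aeval S (X ^ a - X ^ b : (ZMod 2)[X]) c = 0 := by
    rw [hH, mul_comm, map_mul, Module.End.mul_apply, h, map_zero]
  refine ⟨((a : ℤ) - b, 0), ?_, fun n => ?_⟩
  · intro h
    have := congrArg Prod.fst h
    simp at this
    omega
  · have h2 := congrFun h1 (n - ((b : ℤ), 0))
    simp [hS, sub_eq_zero] at h2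
    rw [← h2]
    congr 1
    ext <;> simp
    ring

open Polynomial in
theorem core (c : ℤ × ℤ → ZMod 2)
    (hc : ∀ i j : ℤ, c (i, j) + c (i + 1, j) + c (i, j + 1) = 0)
    (s : Finset (ℤ × ℤ)) (F : ℤ × ℤ → ℤ) (m₀ : ℤ × ℤ) (hm₀ : m₀ ∈ s) (hF : ¬ (2 : ℤ) ∣ F m₀)
    (h : ∀ n, ∑ m ∈ s, F m * ((c (n - m)).val : ℤ) = 0) : Periodic c := by
  obtain ⟨A, hA⟩ : ∃ A : ℤ, ∀ m ∈ s, m.1 ≤ A := by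
    obtain ⟨A, hA⟩ := (s.image Prod.fst).bddAbove
    exact ⟨A, fun m hm => hA (by simpa using ⟨m.2, hm⟩)⟩
  obtain ⟨B, hB⟩ : ∃ A : ℤ, ∀ m ∈ s, m.2 ≤ A := by
    obtain ⟨A, hA⟩ := (s.image Prod.snd).bddAbove
    exact ⟨A, fun m hm => hA (by simpa using ⟨m.1, hm⟩)⟩
  let u : ℤ × ℤ → ℕ := fun m => (A - m.1).toNat
  let v : ℤ × ℤ → ℕ := fun m => (B - m.2).toNat
  obtain ⟨q, hqle, hqp⟩ := Nat.exists_infinite_primes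
    (3 + ∑ m ∈ s, v m + ∑ m ∈ s, (F m).natAbs)
  have : Fact q.Prime := ⟨hqp⟩
  have hqodd : Odd q := hqp.odd_of_ne_two (by omega)
  have hz : ∀ n, ∑ m ∈ s, F m * ((c (n - q • m)).val : ℤ) = 0 := by
    intro n
    refine Int.eq_zero_of_abs_lt_dvd (frob q s F (fun n => ((c n).val : ℤ)) h n) ?_
    calc _ ≤ ∑ m ∈ s, |F m * ((c (n - q • m)).val : ℤ)| := Finset.abs_sum_le_sum_abs _ _
      _ ≤ ∑ m ∈ s, ((F m).natAbs : ℤ) := by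
        refine Finset.sum_le_sum fun m _ => ?_
        rw [abs_mul, Int.natCast_natAbs]
        have : (c (n - q • m)).val < 2 := ZMod.val_lt _
        rw [Nat.abs_cast]
        have h1 : ((c (n - q • m)).val : ℤ) ≤ 1 := by omega
        nlinarith [abs_nonneg (F m)]
      _ < q := by
        rw [← Nat.cast_sum]
        exact_mod_cast (by omega)
  have hz2 : ∀ n, ∑ m ∈ s, (F m : ZMod 2) * c (n - q • m) = 0 := by
    intro n
    have := congrArg (Int.cast : ℤ → ZMod 2) (hz n)
    simpa using this
  let G : (ZMod 2)[X] := ∑ m ∈ s, C (F m : ZMod 2) * X ^ (q * u m) * (1 + X) ^ (q * v m)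
  have hG : G ≠ 0 := by
    refine bivar_ne_zero s (fun m => (F m : ZMod 2)) u v ?_ q hqodd ?_ m₀ hm₀ ?_
    · intro a ha b hb h1 h2
      have := hA a ha; have := hA b hb; have := hB a ha; have := hB b hb
      simp only [u, v] at h1 h2
      ext <;> omega
    · intro m hm
      have := Finset.single_le_sum (f := v) (fun _ _ => Nat.zero_le _) hm
      omega
    · intro h0
      exact hF (by exact_mod_cast (ZMod.intCast_zmod_eq_zero_iff_dvd _ 2).1 h0)
  let S : Module.End (ZMod 2) (ℤ × ℤ → ZMod 2) := LinearMap.funLeft _ _ (fun n => n + ((1 : ℤ), 0))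
  have hS : ∀ (d : ℤ × ℤ → ZMod 2) (k : ℕ) (n : ℤ × ℤ), (S ^ k) d n = d (n + ((k : ℤ), 0)) := by
    intro d k
    induction k with
    | zero => rintro ⟨n1, n2⟩; simp
    | succ k ih =>
      intro n
      rw [pow_succ', Module.End.mul_apply]
      simp only [S, LinearMap.funLeft_apply] at ih ⊢
      rw [ih]
      congr 1
      ext <;> simp
      ring
  have hT : ∀ (k : ℕ) (n : ℤ × ℤ), ((1 + S) ^ k) c n = c (n + (0, (k : ℤ))) := by
    intro k
    induction k with
    | zero => rintro ⟨n1, n2⟩; simp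
    | succ k ih =>
      intro n
      rw [pow_succ', Module.End.mul_apply, LinearMap.add_apply, Pi.add_apply]
      simp only [S, LinearMap.funLeft_apply, Module.End.one_apply] at ih ⊢
      rw [ih, ih]
      have h1 := hc n.1 (n.2 + k)
      have h2 := eq_neg_of_add_eq_zero_left h1
      rw [ZMod.neg_eq_self_mod_two] at h2
      obtain ⟨n1, n2⟩ := n
      simpa [add_assoc] using h2
  refine periodic_of_poly c S hS G hG ?_
  ext n
  have h1 := hz2 (n + (q * A, q * B))
  simp only [G, map_sum, map_mul, map_pow, map_add, aeval_X, aeval_C, map_one, LinearMap.sum_apply,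
    Finset.sum_apply, Module.End.mul_apply, Pi.zero_apply]
  rw [← h1]
  refine Finset.sum_congr rfl fun m hm => ?_
  rw [Module.algebraMap_end_apply, Pi.smul_apply, hS, hT, smul_eq_mul]
  congr 2
  have := hA m hm; have := hB m hm
  ext
  · simp [u, Int.toNat_of_nonneg (sub_nonneg.2 (hA m hm))]; ring
  · simp [v, Int.toNat_of_nonneg (sub_nonneg.2 (hB m hm))]; ring

/-- a Ledrappier configuration with a nontrivial annihilator over ℤ is periodic. -/
theorem ledrappier_int_annihilator_periodic (c : ℤ × ℤ → ZMod 2)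
    (hc : ∀ i j : ℤ, c (i, j) + c (i + 1, j) + c (i, j + 1) = 0)
    (h : ∃ f : LP ℤ, f ≠ 0 ∧ Annihilates f (fun n => ((c n).val : ℤ))) :
    Periodic c := by
  obtain ⟨f, hf, hann⟩ := h
  have hne : f.coeff.support.Nonempty := by
    rw [Finset.nonempty_iff_ne_empty]
    intro h0
    apply hf
    simpa using h0
  obtain ⟨g, hg, hg1⟩ := Finset.extract_gcd (fun m => f.coeff m) hne
  have hd : f.coeff.support.gcd (fun m => f.coeff m) ≠ 0 := by
    obtain ⟨m, hm⟩ := hne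
    intro h0
    have := hg m hm
    rw [h0, zero_mul] at this
    exact (Finsupp.mem_support_iff.1 hm) this
  obtain ⟨m₀, hm₀, hodd⟩ : ∃ m ∈ f.coeff.support, ¬ (2 : ℤ) ∣ g m := by
    by_contra! hcon
    have := Finset.dvd_gcd hcon
    rw [hg1] at this
    norm_num at this
  refine core c hc f.coeff.support g m₀ hm₀ hodd fun n => ?_
  have h1 := hann n
  rw [Finset.sum_congr rfl (fun m hm => by rw [hg m hm, mul_assoc]), ← Finset.mul_sum] at h1
  exact (mul_eq_zero.1 h1).resolve_left hd
end

section
/- Let p be a prime, let f be a Laurent polynomial over F_p in two variables with no line polynomial factors, and let c : ℤ² → F_p be annihilated by f. Let c' : ℤ² → ℤ be obtained from c by the renaming a ↦ a for a ∈ {0,…,p−1}. If some nonzero Laurent polynomial over ℤ annihilates c', then c is two-periodic. -/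
namespace NLF

open AddMonoidAlgebra

/-- shift operator -/
noncomputable def shiftHom (R : Type*) [CommRing R] :
    Multiplicative (ℤ × ℤ) →* Module.End R (ℤ × ℤ → R) where
  toFun m := LinearMap.funLeft R R (fun n => n - m.toAdd)
  map_one' := by
    ext1 c
    funext n
    simp [LinearMap.funLeft_apply]
  map_mul' a b := by
    apply LinearMap.ext
    intro c
    funext n
    simp [LinearMap.funLeft_apply, Module.End.mul_apply, sub_sub]

/-- action of Laurent polynomials on configurations -/
noncomputable def act (R : Type*) [CommRing R] : LP R →ₐ[R] Module.End R (ℤ × ℤ → R) :=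
  AddMonoidAlgebra.lift R (Module.End R (ℤ × ℤ → R)) (ℤ × ℤ) (shiftHom R)

theorem act_single {R : Type*} [CommRing R] (m : ℤ × ℤ) (a : R) (c : ℤ × ℤ → R) (n : ℤ × ℤ) :
    act R (single m a) c n = a * c (n - m) := by
  simp [act, shiftHom, LinearMap.funLeft_apply]

theorem act_apply {R : Type*} [CommRing R] (f : LP R) (c : ℤ × ℤ → R) (n : ℤ × ℤ) :
    act R f c n = f.coeff.sum fun m a => a * c (n - m) := by
  simp [act, AddMonoidAlgebra.lift_apply, Finsupp.sum, shiftHom, LinearMap.funLeft_apply,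
    LinearMap.sum_apply]

theorem annihilates_iff {R : Type*} [CommRing R] (f : LP R) (c : ℤ × ℤ → R) :
    Annihilates f c ↔ act R f c = 0 := by
  constructor
  · intro h
    funext n
    rw [act_apply]
    exact h n
  · intro h n
    have := congrFun h n
    rw [act_apply] at this
    exact this

/-- annihilator ideal -/
noncomputable def annI {R : Type*} [CommRing R] (c : ℤ × ℤ → R) : Ideal (LP R) where
  carrier := {f | act R f c = 0}
  zero_mem' := by simp
  add_mem' := by
    intro a b ha hb
    simp only [Set.mem_ofPred_eq] at *
    simp [map_add, LinearMap.add_apply, ha, hb]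
  smul_mem' := by
    intro a b hb
    simp only [Set.mem_ofPred_eq] at *
    simp [smul_eq_mul, map_mul, Module.End.mul_apply, hb]

theorem mem_annI {R : Type*} [CommRing R] (c : ℤ × ℤ → R) (f : LP R) :
    f ∈ annI c ↔ act R f c = 0 := Iff.rfl

theorem act_map {R S : Type*} [CommRing R] [CommRing S] (φ : R →+* S) (f : LP R)
    (c : ℤ × ℤ → R) (n : ℤ × ℤ) :
    act S (mapRingHom (ℤ × ℤ) φ f) (fun n => φ (c n)) n = φ (act R f c n) := by
  induction f using AddMonoidAlgebra.induction_linear with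
  | zero => simp
  | add f g hf hg => simp [map_add, LinearMap.add_apply, hf, hg]
  | single m a => simp [act_single]

theorem charP_LP (p : ℕ) [Fact p.Prime] : CharP (LP (ZMod p)) p :=
  charP_of_injective_algebraMap (algebraMap (ZMod p) (LP (ZMod p))).injective p

/-- The substitution x ↦ x^k -/
noncomputable def psi (R : Type*) [CommRing R] (k : ℕ) : LP R →+* LP R :=
  AddMonoidAlgebra.mapDomainRingHom R (DistribSMul.toAddMonoidHom (ℤ × ℤ) k)

theorem psi_single {R : Type*} [CommRing R] (k : ℕ) (m : ℤ × ℤ) (a : R) :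
    psi R k (single m a) = single (k • m) a := by
  simp [psi]

theorem pow_eq_psi (q : ℕ) [Fact q.Prime] (g : LP (ZMod q)) : g ^ q = psi (ZMod q) q g := by
  have := charP_LP q
  induction g using AddMonoidAlgebra.induction_linear with
  | zero => simp [(Fact.out : q.Prime).ne_zero]
  | add f g hf hg => rw [add_pow_char, hf, hg, map_add]
  | single m a => simp [psi_single, single_pow]

theorem psi_map {R S : Type*} [CommRing R] [CommRing S] (φ : R →+* S) (k : ℕ) (f : LP R) :
    psi S k (mapRingHom (ℤ × ℤ) φ f) = mapRingHom (ℤ × ℤ) φ (psi R k f) := by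
  induction f using AddMonoidAlgebra.induction_linear with
  | zero => simp
  | add f g hf hg => simp only [map_add, hf, hg]
  | single m a => simp [psi_single]

theorem psi_mul {R : Type*} [CommRing R] (k l : ℕ) (f : LP R) :
    psi R k (psi R l f) = psi R (k * l) f := by
  induction f using AddMonoidAlgebra.induction_linear with
  | zero => simp
  | add f g hf hg => simp only [map_add, hf, hg]
  | single m a => simp [psi_single, mul_smul]

theorem psi_eq_sum {R : Type*} [CommRing R] (k : ℕ) (f : LP R) :
    psi R k f = ∑ m ∈ f.coeff.support, single (k • m) (f.coeff m) := by
  conv_lhs => rw [← AddMonoidAlgebra.sum_coeff_single f]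
  rw [Finsupp.sum, map_sum]
  simp [psi_single]

theorem act_psi_bound (f : LP ℤ) (c : ℤ × ℤ → ℤ) (B : ℤ) (hB : ∀ n, |c n| ≤ B) (k : ℕ)
    (n : ℤ × ℤ) : |act ℤ (psi ℤ k f) c n| ≤ (∑ m ∈ f.coeff.support, |f.coeff m|) * B := by
  rw [psi_eq_sum, map_sum, LinearMap.sum_apply, Finset.sum_apply, Finset.sum_mul]
  refine (Finset.abs_sum_le_sum_abs _ _).trans (Finset.sum_le_sum fun m _ => ?_)
  rw [act_single, abs_mul]
  exact mul_le_mul_of_nonneg_left (hB _) (abs_nonneg _)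

theorem frob_step (f : LP ℤ) (c : ℤ × ℤ → ℤ) (hf : act ℤ f c = 0) (q : ℕ) (hq : q.Prime)
    (n : ℤ × ℤ) : (q : ℤ) ∣ act ℤ (psi ℤ q f) c n := by
  have : Fact q.Prime := ⟨hq⟩
  have h1 : act (ZMod q) (mapRingHom (ℤ × ℤ) (Int.castRingHom (ZMod q)) f)
      (fun n => Int.castRingHom (ZMod q) (c n)) = 0 := by
    funext n
    rw [act_map, hf]
    simp
  have h2 : (mapRingHom (ℤ × ℤ) (Int.castRingHom (ZMod q)) f) ^ q ∈
      annI (fun n => Int.castRingHom (ZMod q) (c n)) :=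
    Ideal.pow_mem_of_mem _ ((mem_annI _ _).2 h1) q hq.pos
  rw [pow_eq_psi, psi_map, mem_annI] at h2
  have h3 := congrFun h2 n
  rw [act_map] at h3
  exact (ZMod.intCast_zmod_eq_zero_iff_dvd _ _).1 (by simpa using h3)

theorem psi_ann (f : LP ℤ) (c : ℤ × ℤ → ℤ) (hf : act ℤ f c = 0) (B : ℤ)
    (hB : ∀ n, |c n| ≤ B) (C : ℕ) (hC : (∑ m ∈ f.coeff.support, |f.coeff m|) * B ≤ C) (k : ℕ) :
    k ≠ 0 → (∀ q : ℕ, q.Prime → q ∣ k → C < q) → act ℤ (psi ℤ k f) c = 0 := by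
  induction k using induction_on_primes with
  | zero => intro h; exact absurd rfl h
  | one =>
    intro _ _
    rw [psi_eq_sum]
    simp only [one_smul]
    have := AddMonoidAlgebra.sum_coeff_single f
    rw [Finsupp.sum] at this
    rw [this, hf]
  | prime_mul q k hq ih =>
    intro h0 h
    have hk := ih (right_ne_zero_of_mul h0) (fun l hl hlk => h l hl (hlk.mul_left q))
    have hqC := h q hq (dvd_mul_right q k)
    funext n
    have h1 := frob_step _ c hk q hq n
    rw [psi_mul] at h1
    refine Int.eq_zero_of_abs_lt_dvd h1 ?_
    calc _ ≤ _ := act_psi_bound f c B hB _ n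
      _ ≤ (C : ℤ) := hC
      _ < q := by exact_mod_cast hqC

theorem psi_ann' (f : LP ℤ) (c : ℤ × ℤ → ℤ) (hf : act ℤ f c = 0) (B : ℤ)
    (hB : ∀ n, |c n| ≤ B) : ∃ r : ℕ, r ≠ 0 ∧ ∀ j : ℕ, psi ℤ (1 + r * j) f ∈ annI c := by
  set C := ((∑ m ∈ f.coeff.support, |f.coeff m|) * B).toNat with hC
  refine ⟨C.factorial, Nat.factorial_ne_zero _, fun j => ?_⟩
  refine psi_ann f c hf B hB C (Int.self_le_toNat _) _ (by omega) ?_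
  intro q hq hqd
  by_contra hlt
  have h1 : q ∣ C.factorial := (hq.dvd_factorial).2 (not_lt.1 hlt)
  have h2 : q ∣ 1 := (Nat.dvd_add_left (h1.mul_right j)).1 hqd
  exact hq.one_lt.ne' (Nat.dvd_one.1 h2)

/-- existence of a product-of-lines annihilator -/
theorem exists_prod (f : LP ℤ) (hf0 : f ≠ 0) (c : ℤ × ℤ → ℤ) (hf : act ℤ f c = 0) (B : ℤ)
    (hB : ∀ n, |c n| ≤ B) : ∃ (s : Finset (ℤ × ℤ)) (m₀ : ℤ × ℤ) (r : ℕ), r ≠ 0 ∧ m₀ ∉ s ∧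
      act ℤ (∏ m ∈ s, (single (r • m₀) 1 - single (r • m) 1)) c = 0 := by
  obtain ⟨r, hr, h⟩ := psi_ann' f c hf B hB
  have hne : f.coeff.support.Nonempty := by
    rw [Finsupp.support_nonempty_iff]
    simpa using hf0
  obtain ⟨m₀, hm₀⟩ := hne
  have key : ∀ P : Polynomial (LP ℤ),
      ∑ m ∈ f.coeff.support, P.eval (single (r • m) 1) * single m (f.coeff m) ∈ annI c := by
    intro P
    induction P using Polynomial.induction_on' with
    | add P Q hP hQ =>
      simp only [Polynomial.eval_add, add_mul, Finset.sum_add_distrib]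
      exact add_mem hP hQ
    | monomial j a =>
      have := Ideal.mul_mem_left _ a (h j)
      rw [psi_eq_sum, Finset.mul_sum] at this
      convert this using 2 with m hm
      rw [Polynomial.eval_monomial, mul_assoc, single_pow, single_mul_single]
      congr 2
      · rw [add_smul, one_smul, mul_comm r j, mul_smul, add_comm]
      · simp
  refine ⟨f.coeff.support.erase m₀, m₀, r, hr, by simp, ?_⟩
  have h1 := key (∏ m ∈ f.coeff.support.erase m₀,
    (Polynomial.X - Polynomial.C (single (r • m) 1)))
  rw [Finset.sum_eq_single m₀ _ (fun h => absurd hm₀ h)] at h1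
  · rw [Polynomial.eval_prod] at h1
    simp only [Polynomial.eval_sub, Polynomial.eval_X, Polynomial.eval_C] at h1
    rw [mul_comm, mem_annI, map_mul, Module.End.mul_apply] at h1
    funext n
    have h2 := congrFun h1 (n + m₀)
    rw [act_single, add_sub_cancel_right] at h2
    exact (mul_eq_zero.1 h2).resolve_left (Finsupp.mem_support_iff.1 hm₀)
  · intro m hm hne
    rw [Polynomial.eval_prod, Finset.prod_eq_zero (Finset.mem_erase.2 ⟨hne, hm⟩) (by simp),
      zero_mul]

/-- A unit algebraic over a finite field is a root of unity. -/
theorem torsion_of_root {K A : Type*} [Field K] [Finite K] [CommRing A] (φ : K →+* A) (T : A)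
    (hT : IsUnit T) (P : Polynomial K) (hP : P ≠ 0) (h : P.eval₂ φ T = 0) :
    ∃ N : ℕ, 0 < N ∧ T ^ N = 1 := by
  let _ : Algebra K A := φ.toAlgebra
  have hint : IsIntegral K T := by
    rw [← isAlgebraic_iff_isIntegral]
    exact ⟨P, hP, h⟩
  have hfin : Module.Finite K (Algebra.adjoin K {T}) := by
    have := hint.fg_adjoin_singleton
    exact Module.Finite.of_fg this
  have : Finite (Algebra.adjoin K {T}) := Module.finite_of_finite K
  let T' : Algebra.adjoin K {T} := ⟨T, Algebra.subset_adjoin rfl⟩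
  obtain ⟨a, b, hab, he⟩ := Finite.exists_ne_map_eq_of_infinite (fun n : ℕ => T' ^ n)
  have he' : T ^ a = T ^ b := by
    have := congrArg Subtype.val he
    simpa [T'] using this
  clear he
  wlog hlt : a < b generalizing a b
  · exact this b a hab.symm he'.symm (lt_of_le_of_ne (not_lt.1 hlt) hab.symm)
  refine ⟨b - a, by omega, ?_⟩
  refine (hT.pow a).mul_left_cancel ?_
  rw [← pow_add, mul_one, he']
  congr 1
  omega

theorem isUnit_single {R : Type*} [CommRing R] (m : ℤ × ℤ) (a : R) (ha : IsUnit a) :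
    IsUnit (single m a : LP R) := by
  obtain ⟨b, hb⟩ := ha.exists_right_inv
  refine IsUnit.of_mul_eq_one (single (-m) b) ?_
  rw [single_mul_single, hb, add_neg_cancel, one_def]

/-- `Good f a`: modulo `f` and `a` all monomials are uniformly torsion. -/
def Good {R : Type*} [CommRing R] (f a : LP R) : Prop :=
  ∃ N : ℕ, 0 < N ∧ ∀ w : ℤ × ℤ, (single (N • w) 1 - 1 : LP R) ∈ Ideal.span {f, a}

theorem Good.of_isUnit {R : Type*} [CommRing R] (f a : LP R) (ha : IsUnit a) : Good f a := by
  refine ⟨1, one_pos, fun w => ?_⟩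
  have : Ideal.span {f, a} = ⊤ := Ideal.eq_top_of_isUnit_mem _ (Ideal.subset_span (by simp)) ha
  rw [this]
  trivial

theorem Good.mul {p : ℕ} [Fact p.Prime] {f a b : LP (ZMod p)} (ha : Good f a) (hb : Good f b) :
    Good f (a * b) := by
  have := charP_LP p
  obtain ⟨N, hN, ha⟩ := ha
  obtain ⟨M, hM, hb⟩ := hb
  have hp := (Fact.out : p.Prime)
  refine ⟨p * (N * M), by have := hp.pos; positivity, fun w => ?_⟩
  have h1 := ha (M • w)
  have h2 := hb (N • w)
  rw [smul_smul] at h1 h2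
  rw [mul_comm M N] at h2
  have h3 : (single ((p * (N * M)) • w) 1 - 1 : LP (ZMod p)) =
      (single ((N * M) • w) 1 - 1) ^ p := by
    rw [sub_pow_char, single_pow, one_pow, one_pow, mul_smul]
  rw [h3]
  have h4 : (single ((N * M) • w) 1 - 1 : LP (ZMod p)) ^ 2 ∈ Ideal.span {f, a * b} := by
    rw [Ideal.mem_span_pair] at h1 h2 ⊢
    obtain ⟨x, y, h1⟩ := h1
    obtain ⟨z, t, h2⟩ := h2
    refine ⟨x * z * f + x * t * b + y * a * z, y * t, ?_⟩
    rw [sq]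
    nth_rewrite 1 [← h1]
    rw [← h2]
    ring
  exact Ideal.mem_of_dvd _ (pow_dvd_pow _ hp.two_le) h4

theorem Good.prod {p : ℕ} [Fact p.Prime] {f : LP (ZMod p)} {ι : Type*} (s : Finset ι)
    (g : ι → LP (ZMod p)) (h : ∀ i ∈ s, Good f (g i)) : Good f (∏ i ∈ s, g i) := by
  classical
  induction s using Finset.induction_on with
  | empty => exact Good.of_isUnit _ _ (by simp)
  | insert a s ha ih =>
    rw [Finset.prod_insert ha]
    exact (h a (by simp)).mul (ih fun i hi => h i (by simp [hi]))

/-- evaluate a univariate polynomial at the monomial `x^v` -/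
noncomputable def ev {R : Type*} [CommRing R] (v : ℤ × ℤ) : Polynomial R →+* LP R :=
  (Polynomial.aeval (single v 1 : LP R)).toRingHom

theorem ev_eq_sum {R : Type*} [CommRing R] (v : ℤ × ℤ) (q : Polynomial R) :
    ev v q = ∑ i ∈ q.support, single (i • v) (q.coeff i) := by
  simp only [ev, AlgHom.toRingHom_eq_coe, RingHom.coe_coe]
  rw [Polynomial.aeval_eq_sum_range, Finset.sum_subset Polynomial.supp_subset_range_natDegree_succ]
  · simp [single_pow]
  · intro i _ hi
    simp [Polynomial.notMem_support_iff.1 hi]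

theorem ev_monomial {R : Type*} [CommRing R] (v : ℤ × ℤ) (n : ℕ) (a : R) :
    ev v (Polynomial.monomial n a) = single (n • v) a := by
  simp [ev, Polynomial.aeval_monomial, single_pow]

theorem nsmul_inj' {v : ℤ × ℤ} (hv : v ≠ 0) {i j : ℕ} (h : i • v = j • v) : i = j := by
  rw [← natCast_zsmul, ← natCast_zsmul] at h
  exact_mod_cast smul_left_injective ℤ hv h

theorem ev_coeff {R : Type*} [CommRing R] (v : ℤ × ℤ) (hv : v ≠ 0) (q : Polynomial R) (i : ℕ) :
    (ev v q).coeff (i • v) = q.coeff i := by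
  classical
  have hinj : ∀ j : ℕ, j • v = i • v → j = i := fun j h =>
    nsmul_inj' hv h
  rw [ev_eq_sum, coeff_sum, Finsupp.finsetSum_apply, Finset.sum_eq_single i]
  · simp
  · intro j _ hj
    rw [coeff_single_apply, if_neg (fun h => hj (hinj j h))]
  · intro hi
    simp [Polynomial.notMem_support_iff.1 hi]

theorem isLinePoly_ev {R : Type*} [CommRing R] (v : ℤ × ℤ) (hv : v ≠ 0) (q : Polynomial R)
    (hq : 1 < q.support.card) : IsLinePoly v (ev v q) := by
  classical
  constructor
  · refine hq.trans_le ?_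
    refine Finset.card_le_card_of_injOn (fun i : ℕ => i • v) ?_ ?_
    · intro i hi
      simp only [Finset.mem_coe, Finsupp.mem_support_iff, ev_coeff v hv] at hi ⊢
      simpa using hi
    · intro i _ j _ h
      exact nsmul_inj' hv h
  · refine ⟨0, fun m hm => ?_⟩
    rw [Finsupp.mem_support_iff, ev_eq_sum, coeff_sum, Finsupp.finsetSum_apply] at hm
    obtain ⟨i, _, hi⟩ := Finset.exists_ne_zero_of_sum_ne_zero hm
    rw [coeff_single_apply] at hi
    have : i • v = m := by
      by_contra h
      exact hi (if_neg h)
    refine ⟨i, ?_⟩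
    rw [← this]
    simp

/-- evaluate a bivariate polynomial at monomials -/
noncomputable def ev2 {R : Type*} [CommRing R] (v w : ℤ × ℤ) :
    Polynomial (Polynomial R) →+* LP R :=
  Polynomial.eval₂RingHom (ev v) (single w 1)

theorem exists_ev2 {R : Type*} [CommRing R] (v w : ℤ × ℤ)
    (hvw : ∀ m : ℤ × ℤ, ∃ i j : ℤ, m = i • v + j • w) (f : LP R) :
    ∃ n : ℕ, ∃ F : Polynomial (Polynomial R), ev2 v w F = single (n • (v + w)) 1 * f := by
  induction f using AddMonoidAlgebra.induction_linear with
  | zero => exact ⟨0, 0, by simp⟩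
  | add f g hf hg =>
    obtain ⟨n, F, hF⟩ := hf
    obtain ⟨m, G, hG⟩ := hg
    have hX : ∀ k : ℕ, ev2 v w (Polynomial.monomial k (Polynomial.monomial k (1 : R))) =
        single (k • (v + w)) 1 := by
      intro k
      simp [ev2, Polynomial.eval₂_monomial, ev_monomial, single_pow, single_mul_single]
    refine ⟨n + m, Polynomial.monomial m (Polynomial.monomial m 1) * F +
      Polynomial.monomial n (Polynomial.monomial n 1) * G, ?_⟩
    rw [map_add, map_mul, map_mul, hX, hX, hF, hG, ← mul_assoc, ← mul_assoc, single_mul_single,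
      single_mul_single, mul_one, ← add_smul, ← add_smul, add_comm m n, mul_add]
  | single m a =>
    obtain ⟨i, j, rfl⟩ := hvw m
    refine ⟨i.natAbs + j.natAbs, Polynomial.monomial (i.natAbs + j.natAbs + j).toNat
      (Polynomial.monomial (i.natAbs + j.natAbs + i).toNat a), ?_⟩
    simp only [ev2, Polynomial.coe_eval₂RingHom, Polynomial.eval₂_monomial, ev_monomial,
      single_pow, single_mul_single, one_pow, mul_one, one_mul]
    congr 1
    rw [← natCast_zsmul v, ← natCast_zsmul w, ← natCast_zsmul (v + w),
      Int.toNat_of_nonneg (by omega), Int.toNat_of_nonneg (by omega)]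
    push_cast
    module

theorem units_torsion {A : Type*} [CommRing A] (a b : Aˣ) (N M : ℕ) (ha : a ^ N = 1)
    (hb : b ^ M = 1) (i j : ℤ) : (a ^ i * b ^ j) ^ (N * M) = 1 := by
  rw [mul_pow, ← zpow_natCast, ← zpow_natCast, ← zpow_mul, ← zpow_mul]
  have e1 : i * ((N * M : ℕ) : ℤ) = N * (i * M) := by push_cast; ring
  have e2 : j * ((N * M : ℕ) : ℤ) = M * (j * N) := by push_cast; ring
  rw [e1, e2, zpow_mul a N, zpow_mul b M, zpow_natCast, zpow_natCast, ha, hb]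
  simp

theorem good_irred {p : ℕ} [Fact p.Prime] (f : LP (ZMod p))
    (hline : ¬ ∃ (g : LP (ZMod p)) (u : ℤ × ℤ), u ≠ 0 ∧ IsLinePoly u g ∧ g ∣ f)
    (v w : ℤ × ℤ) (hv : v ≠ 0) (hvw : ∀ m : ℤ × ℤ, ∃ i j : ℤ, m = i • v + j • w)
    (q : Polynomial (ZMod p)) (hq : Irreducible q) : Good f (ev v q) := by
  by_cases hcard : q.support.card ≤ 1
  · obtain ⟨n, a, rfl⟩ := Polynomial.card_support_le_one_iff_monomial.1 hcard
    refine Good.of_isUnit _ _ ?_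
    rw [ev_monomial]
    refine isUnit_single _ _ (isUnit_iff_ne_zero.2 ?_)
    rintro rfl
    exact hq.ne_zero (by simp)
  have hl := isLinePoly_ev v hv q (not_le.1 hcard)
  have hnd : ¬ ev v q ∣ f := fun h => hline ⟨_, v, hv, hl, h⟩
  obtain ⟨n, F, hF⟩ := exists_ev2 v w hvw f
  have : Fact (Irreducible q) := ⟨hq⟩
  have hfinK : Finite (AdjoinRoot q) := by
    have : Module.Finite (ZMod p) (AdjoinRoot q) :=
      (AdjoinRoot.powerBasis hq.ne_zero).finite
    exact Module.finite_of_finite (ZMod p)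
  let I : Ideal (LP (ZMod p)) := Ideal.span {f, ev v q}
  let π : LP (ZMod p) →+* LP (ZMod p) ⧸ I := Ideal.Quotient.mk I
  have hπf : π f = 0 := Ideal.Quotient.eq_zero_iff_mem.2 (Ideal.subset_span (by simp))
  have hπq : π (ev v q) = 0 := Ideal.Quotient.eq_zero_iff_mem.2 (Ideal.subset_span (by simp))
  -- S
  have hS : ∃ N : ℕ, 0 < N ∧ (π (single v 1)) ^ N = 1 := by
    refine torsion_of_root (π.comp (algebraMap (ZMod p) (LP (ZMod p)))) _
      ((isUnit_single v 1 isUnit_one).map π) q hq.ne_zero ?_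
    rw [← Polynomial.hom_eval₂]
    exact hπq
  -- the map from the residue field
  have hlift : Polynomial.eval₂ (π.comp (algebraMap (ZMod p) (LP (ZMod p)))) (π (single v 1)) q
      = 0 := by
    rw [← Polynomial.hom_eval₂]
    exact hπq
  let φ : AdjoinRoot q →+* LP (ZMod p) ⧸ I := AdjoinRoot.lift _ _ hlift
  have hφ : φ.comp (AdjoinRoot.mk q) = π.comp (ev v) := by
    apply Polynomial.ringHom_ext
    · intro a
      simp [φ, ev]
    · simp [φ, ev]
  have hT : ∃ N : ℕ, 0 < N ∧ (π (single w 1)) ^ N = 1 := by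
    refine torsion_of_root φ _ ((isUnit_single w 1 isUnit_one).map π)
      (F.map (AdjoinRoot.mk q)) ?_ ?_
    · intro h0
      have hdvd : Polynomial.C q ∣ F := by
        rw [Polynomial.C_dvd_iff_dvd_coeff]
        intro i
        have := congrArg (fun P => Polynomial.coeff P i) h0
        simpa [Polynomial.coeff_map, AdjoinRoot.mk_eq_zero] using this
      have h1 := map_dvd (ev2 v w) hdvd
      rw [hF] at h1
      have h2 : ev2 v w (Polynomial.C q) = ev v q := by simp [ev2]
      rw [h2, (isUnit_single _ _ isUnit_one).dvd_mul_left] at h1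
      exact hnd h1
    · rw [Polynomial.eval₂_map, hφ, ← Polynomial.hom_eval₂]
      change π (ev2 v w F) = 0
      rw [hF, map_mul, hπf, mul_zero]
  obtain ⟨N, hN, hS⟩ := hS
  obtain ⟨M, hM, hT⟩ := hT
  refine ⟨N * M, Nat.mul_pos hN hM, fun m => ?_⟩
  -- pass to units via a monoid hom
  let χ : Multiplicative (ℤ × ℤ) →* LP (ZMod p) ⧸ I :=
    (π : LP (ZMod p) →* LP (ZMod p) ⧸ I).comp (AddMonoidAlgebra.of (ZMod p) (ℤ × ℤ))
  let χ' : Multiplicative (ℤ × ℤ) →* (LP (ZMod p) ⧸ I)ˣ := χ.toHomUnits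
  have hχ : ∀ u : ℤ × ℤ, ((χ' (Multiplicative.ofAdd u) : (LP (ZMod p) ⧸ I)ˣ) : LP (ZMod p) ⧸ I) =
      π (single u 1) := fun u => rfl
  have hS' : χ' (Multiplicative.ofAdd v) ^ N = 1 := by
    apply Units.ext
    rw [Units.val_pow_eq_pow_val, hχ, hS, Units.val_one]
  have hT' : χ' (Multiplicative.ofAdd w) ^ M = 1 := by
    apply Units.ext
    rw [Units.val_pow_eq_pow_val, hχ, hT, Units.val_one]
  obtain ⟨i, j, rfl⟩ := hvw m
  have hmain : χ' (Multiplicative.ofAdd ((N * M) • (i • v + j • w))) = 1 := by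
    rw [ofAdd_nsmul, ofAdd_add, ofAdd_zsmul, ofAdd_zsmul, map_pow, map_mul, map_zpow, map_zpow]
    exact units_torsion _ _ N M hS' hT' i j
  have h5 := congrArg Units.val hmain
  rw [hχ, Units.val_one] at h5
  change _ ∈ I
  rw [← Ideal.Quotient.eq_zero_iff_mem]
  change π _ = 0
  rw [map_sub, h5, map_one, sub_self]

theorem good_ev {p : ℕ} [Fact p.Prime] (f : LP (ZMod p))
    (hline : ¬ ∃ (g : LP (ZMod p)) (u : ℤ × ℤ), u ≠ 0 ∧ IsLinePoly u g ∧ g ∣ f)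
    (v w : ℤ × ℤ) (hv : v ≠ 0) (hvw : ∀ m : ℤ × ℤ, ∃ i j : ℤ, m = i • v + j • w)
    (q : Polynomial (ZMod p)) (hq : q ≠ 0) : Good f (ev v q) := by
  induction q using WfDvdMonoid.induction_on_irreducible with
  | zero => exact absurd rfl hq
  | unit u hu => exact Good.of_isUnit _ _ (hu.map _)
  | mul a i ha hi ih =>
    rw [map_mul]
    exact (good_irred f hline v w hv hvw i hi).mul (ih ha)

theorem good_monomial_sub {p : ℕ} [Fact p.Prime] (f : LP (ZMod p))
    (hline : ¬ ∃ (g : LP (ZMod p)) (u : ℤ × ℤ), u ≠ 0 ∧ IsLinePoly u g ∧ g ∣ f)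
    (a b : ℤ × ℤ) (hab : a ≠ b) : Good f (single a 1 - single b 1) := by
  obtain ⟨v, w, d, hd, hv, hvw, he⟩ : ∃ (v w : ℤ × ℤ) (d : ℕ), 0 < d ∧ v ≠ 0 ∧
      (∀ m : ℤ × ℤ, ∃ i j : ℤ, m = i • v + j • w) ∧ a - b = d • v := by
    set u := a - b with hu
    have hu0 : u ≠ 0 := sub_ne_zero.2 hab
    have hg : 0 < Int.gcd u.1 u.2 := by
      rw [Nat.pos_iff_ne_zero]
      intro h
      rw [Int.gcd_eq_zero_iff] at h
      exact hu0 (Prod.ext h.1 h.2)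
    obtain ⟨x, y, hxy, hx, hy⟩ := Int.exists_gcd_one hg
    have hbez := Int.gcd_eq_gcd_ab x y
    rw [hxy] at hbez
    set α := Int.gcdA x y
    set β := Int.gcdB x y
    push_cast at hbez
    refine ⟨(x, y), (-β, α), _, hg, ?_, ?_, ?_⟩
    · intro h
      simp only [Prod.mk_eq_zero] at h
      rw [h.1, h.2] at hbez
      simp at hbez
    · rintro ⟨m, n⟩
      refine ⟨m * α + n * β, x * n - y * m, ?_⟩
      ext
      · simp only [Prod.fst_add, Prod.smul_fst, smul_eq_mul]
        linear_combination m * hbez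
      · simp only [Prod.snd_add, Prod.smul_snd, smul_eq_mul]
        linear_combination n * hbez
    · ext
      · simp only [nsmul_eq_mul]
        rw [mul_comm]; exact hx
      · simp only [nsmul_eq_mul]
        rw [mul_comm]; exact hy
  have h1 : (single a 1 - single b 1 : LP (ZMod p)) =
      single b 1 * ev v (Polynomial.X ^ d - 1) := by
    have : (Polynomial.X ^ d : Polynomial (ZMod p)) = Polynomial.monomial d 1 :=
      Polynomial.X_pow_eq_monomial d
    rw [map_sub, map_one, this, ev_monomial, mul_sub, single_mul_single, mul_one, mul_one, ← he,
      add_sub_cancel]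
  rw [h1]
  refine (Good.of_isUnit _ _ (isUnit_single _ _ isUnit_one)).mul ?_
  refine good_ev f hline v w hv hvw _ ?_
  exact (Polynomial.monic_X_pow_sub_C 1 hd.ne').ne_zero

end NLF

/-- if f has no line polynomial factors and c ∈ X_f has a nonzero
annihilator over ℤ, then c is two-periodic. -/
theorem no_line_factors_two_periodic (p : ℕ) [Fact p.Prime] (f : LP (ZMod p))
    (hline : ¬ ∃ (g : LP (ZMod p)) (u : ℤ × ℤ), u ≠ 0 ∧ IsLinePoly u g ∧ g ∣ f)
    (c : ℤ × ℤ → ZMod p) (hc : Annihilates f c)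
    (h : ∃ f' : LP ℤ, f' ≠ 0 ∧ Annihilates f' (fun n => ((c n).val : ℤ))) :
    TwoPeriodic c := by
  obtain ⟨f', hf0, hf'⟩ := h
  rw [NLF.annihilates_iff] at hc hf'
  obtain ⟨s, m₀, r, hr, hm₀, hs⟩ := NLF.exists_prod f' hf0 _ hf' p (fun n => by
    rw [abs_of_nonneg (by positivity)]
    exact_mod_cast (ZMod.val_lt (c n)).le)
  have hgood : NLF.Good f (∏ m ∈ s, (AddMonoidAlgebra.single (r • m₀) 1 -
      AddMonoidAlgebra.single (r • m) 1)) := by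
    refine NLF.Good.prod _ _ fun m hm => NLF.good_monomial_sub f hline _ _ ?_
    intro he
    have : m₀ = m := smul_right_injective (ℤ × ℤ) hr he
    exact hm₀ (this ▸ hm)
  have hann : (∏ m ∈ s, (AddMonoidAlgebra.single (r • m₀) 1 -
      AddMonoidAlgebra.single (r • m) 1) : LP (ZMod p)) ∈ NLF.annI c := by
    rw [NLF.mem_annI]
    funext n
    have h1 := NLF.act_map (Int.castRingHom (ZMod p)) _ _ n
      |>.trans (congrArg (Int.castRingHom (ZMod p)) (congrFun hs n))
    simpa [map_prod] using h1
  obtain ⟨N, hN, hper⟩ := hgood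
  have hle : Ideal.span {f, ∏ m ∈ s, (AddMonoidAlgebra.single (r • m₀) 1 -
      AddMonoidAlgebra.single (r • m) 1)} ≤ NLF.annI c := by
    rw [Ideal.span_le]
    rintro x (rfl | rfl)
    · exact hc
    · exact hann
  have hP : ∀ w n : ℤ × ℤ, c (n + N • w) = c n := by
    intro w n
    have h1 := congrFun ((NLF.mem_annI _ _).1 (hle (hper w))) (n + N • w)
    rw [map_sub, map_one, LinearMap.sub_apply, Pi.sub_apply, NLF.act_single,
      add_sub_cancel_right, one_mul, Module.End.one_apply, Pi.zero_apply, sub_eq_zero] at h1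
    exact h1.symm
  refine ⟨N • (1, 0), N • (0, 1), ⟨?_, hP _⟩, ⟨?_, hP _⟩, ?_⟩
  · simp [Prod.ext_iff, hN.ne']
  · simp [Prod.ext_iff, hN.ne']
  · simp [hN.ne']
end

section
/- Let p be a prime, let f be a nonzero Laurent polynomial over F_p in two variables all of whose line polynomial factors are in the same direction u ∈ ℤ²∖{0}, and let c : ℤ² → F_p be annihilated by f. Let c' : ℤ² → ℤ be obtained from c by the renaming a ↦ a for a ∈ {0,…,p−1}. If some nonzero Laurent polynomial over ℤ annihilates c', then c is periodic in direction u: some nonzero integer multiple of u is a period vector of c. -/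
namespace LinePer

open AddMonoidAlgebra

/-- shift action of `ℤ²` on configurations -/
noncomputable def shiftHom (R : Type*) [CommRing R] :
    Multiplicative (ℤ × ℤ) →* Module.End R (ℤ × ℤ → R) where
  toFun s := { toFun := fun c n => c (n - s.toAdd)
               map_add' := fun _ _ => rfl
               map_smul' := fun _ _ => rfl }
  map_one' := by
    ext c n
    simp
  map_mul' a b := by
    refine LinearMap.ext fun c => funext fun n => ?_
    simp [sub_sub]

/-- action of Laurent polynomials on configurations -/
noncomputable def act (R : Type*) [CommRing R] : LP R →ₐ[R] Module.End R (ℤ × ℤ → R) :=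
  AddMonoidAlgebra.lift R (Module.End R (ℤ × ℤ → R)) (ℤ × ℤ) (shiftHom R)

variable {R : Type*} [CommRing R]

theorem act_single (m : ℤ × ℤ) (a : R) (c : ℤ × ℤ → R) (n : ℤ × ℤ) :
    act R (single m a) c n = a * c (n - m) := by
  simp [act, shiftHom]

theorem act_apply (f : LP R) (c : ℤ × ℤ → R) (n : ℤ × ℤ) :
    act R f c n = ∑ m ∈ f.coeff.support, f.coeff m * c (n - m) := by
  simp [act, AddMonoidAlgebra.lift_apply, Finsupp.sum, shiftHom]

theorem annihilates_iff (f : LP R) (c : ℤ × ℤ → R) : Annihilates f c ↔ act R f c = 0 := by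
  constructor
  · intro h
    funext n
    rw [act_apply]
    exact h n
  · intro h n
    rw [← act_apply, h]
    rfl

/-- annihilator ideal -/
noncomputable def annI (c : ℤ × ℤ → R) : Ideal (LP R) where
  carrier := {f | act R f c = 0}
  add_mem' := by
    intro a b ha hb
    simp only [Set.mem_ofPred_eq] at *
    simp [ha, hb]
  zero_mem' := by simp
  smul_mem' := by
    intro a b hb
    simp only [Set.mem_ofPred_eq] at *
    simp [hb]

theorem mem_annI (c : ℤ × ℤ → R) (f : LP R) : f ∈ annI c ↔ act R f c = 0 := Iff.rfl

/-- dilation -/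
noncomputable def dil (R : Type*) [CommRing R] (k : ℕ) : LP R →+* LP R :=
  AddMonoidAlgebra.mapDomainRingHom R (nsmulAddMonoidHom (α := ℤ × ℤ) k)

theorem dil_single (k : ℕ) (m : ℤ × ℤ) (a : R) : dil R k (single m a) = single (k • m) a := by
  simp [dil]

theorem dil_mul (k l : ℕ) (f : LP R) : dil R (k * l) f = dil R k (dil R l f) := by
  induction f using AddMonoidAlgebra.induction_linear with
  | zero => simp
  | add f g hf hg => simp only [map_add, hf, hg]
  | single m a => simp only [dil_single, mul_smul]

theorem dil_one (f : LP R) : dil R 1 f = f := by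
  induction f using AddMonoidAlgebra.induction_linear with
  | zero => simp
  | add f g hf hg => simp only [map_add, hf, hg]
  | single m a => simp only [dil_single, one_smul]

theorem dil_eq (k : ℕ) (f : LP R) :
    dil R k f = ∑ m ∈ f.coeff.support, single (k • m) (f.coeff m) := by
  conv_lhs => rw [← AddMonoidAlgebra.sum_coeff_single f]
  simp only [Finsupp.sum, map_sum, dil_single]

theorem act_dil (k : ℕ) (f : LP R) (c : ℤ × ℤ → R) (n : ℤ × ℤ) :
    act R (dil R k f) c n = ∑ m ∈ f.coeff.support, f.coeff m * c (n - k • m) := by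
  rw [dil_eq]
  simp only [map_sum, LinearMap.sum_apply, Finset.sum_apply, act_single]

theorem map_dil {S : Type*} [CommRing S] (φ : R →+* S) (k : ℕ) (f : LP R) :
    AddMonoidAlgebra.mapRingHom (ℤ × ℤ) φ (dil R k f) =
      dil S k (AddMonoidAlgebra.mapRingHom (ℤ × ℤ) φ f) := by
  induction f using AddMonoidAlgebra.induction_linear with
  | zero => simp
  | add f g hf hg => simp only [map_add, hf, hg]
  | single m a => simp [dil_single]

theorem act_map {S : Type*} [CommRing S] (φ : R →+* S) (f : LP R) (c : ℤ × ℤ → R) (n : ℤ × ℤ) :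
    act S (AddMonoidAlgebra.mapRingHom (ℤ × ℤ) φ f) (fun n => φ (c n)) n = φ (act R f c n) := by
  induction f using AddMonoidAlgebra.induction_linear with
  | zero => simp
  | add f g hf hg => simp only [map_add, LinearMap.add_apply, Pi.add_apply, hf, hg]
  | single m a => simp [act_single]

theorem pow_eq_dil (q : ℕ) [Fact q.Prime] (f : LP (ZMod q)) : f ^ q = dil (ZMod q) q f := by
  have : CharP (LP (ZMod q)) q :=
    charP_of_injective_algebraMap (algebraMap (ZMod q) (LP (ZMod q))).injective q
  induction f using AddMonoidAlgebra.induction_linear with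
  | zero => simp [(Fact.out : q.Prime).ne_zero]
  | add f g hf hg => rw [add_pow_char, hf, hg, map_add]
  | single m a => simp [dil_single, AddMonoidAlgebra.single_pow]

theorem dil_step (F : LP ℤ) (c : ℤ × ℤ → ℤ) (C : ℤ) (hC : ∀ n, |c n| ≤ C) (k q : ℕ)
    (hq : q.Prime) (hlt : (∑ m ∈ F.coeff.support, |F.coeff m|) * C < q)
    (hk : act ℤ (dil ℤ k F) c = 0) : act ℤ (dil ℤ (q * k) F) c = 0 := by
  have : Fact q.Prime := ⟨hq⟩
  funext n
  have h1 : ((act ℤ (dil ℤ (q * k) F) c n : ℤ) : ZMod q) = 0 := by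
    have e := act_map (Int.castRingHom (ZMod q)) (dil ℤ (q * k) F) c n
    have e0 : act (ZMod q) (AddMonoidAlgebra.mapRingHom (ℤ × ℤ) (Int.castRingHom (ZMod q))
        (dil ℤ k F)) (fun n => Int.castRingHom (ZMod q) (c n)) = 0 := by
      funext n
      rw [act_map, hk]
      simp
    rw [dil_mul, map_dil, ← pow_eq_dil] at e
    rw [dil_mul]
    have e2 := Ideal.pow_mem_of_mem (annI _) ((mem_annI _ _).2 e0) q hq.pos
    rw [mem_annI] at e2
    rw [e2] at e
    simpa using e.symm
  have h2 : (q : ℤ) ∣ act ℤ (dil ℤ (q * k) F) c n := (ZMod.intCast_zmod_eq_zero_iff_dvd _ _).1 h1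
  refine Int.eq_zero_of_abs_lt_dvd h2 (lt_of_le_of_lt ?_ hlt)
  rw [act_dil, Finset.sum_mul]
  refine (Finset.abs_sum_le_sum_abs _ _).trans (Finset.sum_le_sum fun m _ => ?_)
  rw [abs_mul]
  exact mul_le_mul_of_nonneg_left (hC _) (abs_nonneg _)

theorem dil_all (F : LP ℤ) (c : ℤ × ℤ → ℤ) (C : ℤ) (hC : ∀ n, |c n| ≤ C) (M : ℕ)
    (hM : (∑ m ∈ F.coeff.support, |F.coeff m|) * C ≤ M)
    (hF : act ℤ F c = 0) (k : ℕ) (hk0 : k ≠ 0) (hk : ∀ q : ℕ, q.Prime → q ∣ k → M < q) :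
    act ℤ (dil ℤ k F) c = 0 := by
  induction k using induction_on_primes with
  | zero => exact absurd rfl hk0
  | one => rwa [dil_one]
  | prime_mul q a hq ih =>
    refine dil_step F c C hC a q hq ?_ (ih ?_ ?_)
    · have := hk q hq (dvd_mul_right _ _)
      omega
    · rintro rfl
      simp at hk0
    · intro q' h1 h2
      exact hk q' h1 (h2.mul_left _)

theorem exists_product (F : LP ℤ) (hF0 : F ≠ 0) (c : ℤ × ℤ → ℤ) (C : ℤ) (hC : ∀ n, |c n| ≤ C)
    (hF : act ℤ F c = 0) : ∃ (r : ℕ) (s : Finset (ℤ × ℤ)) (v0 : ℤ × ℤ), r ≠ 0 ∧ v0 ∉ s ∧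
      act ℤ (∏ v ∈ s, (single (r • v0) 1 - single (r • v) 1)) c = 0 := by
  classical
  obtain ⟨v0, hv0⟩ : F.coeff.support.Nonempty := by
    rw [Finsupp.support_nonempty_iff]
    simpa using hF0
  set M : ℕ := ((∑ m ∈ F.coeff.support, |F.coeff m|) * C).toNat with hM
  set r : ℕ := M.factorial with hr
  have key : ∀ i : ℕ, dil ℤ (1 + i * r) F ∈ annI c := by
    intro i
    refine dil_all F c C hC M (Int.self_le_toNat _) hF _ (by omega) ?_
    intro q hq hd
    by_contra hle
    have h1 : q ∣ r := (Nat.Prime.dvd_factorial hq).2 (by omega)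
    have h2 : q ∣ 1 := (Nat.dvd_add_left (h1.mul_left i)).1 hd
    exact hq.one_lt.ne' (Nat.dvd_one.1 h2)
  refine ⟨r, F.coeff.support.erase v0, v0, Nat.factorial_ne_zero _, by simp, ?_⟩
  set w : ℤ × ℤ → LP ℤ := fun v => single (r • v) 1 with hw
  set G : LP ℤ := ∏ v ∈ F.coeff.support.erase v0, (w v0 - w v) with hG
  set Q : Polynomial (LP ℤ) :=
    ∏ v ∈ F.coeff.support.erase v0, (Polynomial.X - Polynomial.C (w v)) with hQ
  have hdil : ∀ i : ℕ, dil ℤ (1 + i * r) F =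
      ∑ m ∈ F.coeff.support, single m (F.coeff m) * w m ^ i := by
    intro i
    rw [dil_eq]
    refine Finset.sum_congr rfl fun m _ => ?_
    simp only [hw, AddMonoidAlgebra.single_pow, AddMonoidAlgebra.single_mul_single, one_pow,
      mul_one, add_smul, one_smul, mul_smul]
  have hmem : ∑ i ∈ Finset.range (Q.natDegree + 1), Q.coeff i * dil ℤ (1 + i * r) F ∈ annI c :=
    Ideal.sum_mem _ fun i _ => Ideal.mul_mem_left _ _ (key i)
  have hsum : ∑ i ∈ Finset.range (Q.natDegree + 1), Q.coeff i * dil ℤ (1 + i * r) F =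
      single v0 (F.coeff v0) * G := by
    have : ∑ i ∈ Finset.range (Q.natDegree + 1), Q.coeff i * dil ℤ (1 + i * r) F =
        ∑ m ∈ F.coeff.support, single m (F.coeff m) * Q.eval (w m) := by
      simp only [hdil, Polynomial.eval_eq_sum_range, Finset.mul_sum]
      rw [Finset.sum_comm]
      refine Finset.sum_congr rfl fun m _ => Finset.sum_congr rfl fun i _ => ?_
      ring
    rw [this, Finset.sum_eq_single v0]
    · congr 1
      rw [hQ, hG, Polynomial.eval_prod]
      simp
    · intro m hm hne
      rw [hQ, Polynomial.eval_prod, Finset.prod_eq_zero (i := m), mul_zero]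
      · simp [hne, Finsupp.mem_support_iff.1 hm]
      · simp
    · intro h
      exact absurd hv0 h
  rw [hsum] at hmem
  have h2 := Ideal.mul_mem_left _ (single (-v0) 1) hmem
  rw [← mul_assoc, AddMonoidAlgebra.single_mul_single, neg_add_cancel, one_mul] at h2
  rw [mem_annI, map_mul, Module.End.mul_apply] at h2
  funext n
  have h3 := congrFun h2 n
  rw [act_single] at h3
  have h4 := (mul_eq_zero.1 h3).resolve_left (Finsupp.mem_support_iff.1 hv0)
  simpa using h4

theorem exists_top [IsDomain R] {Γ : Type*} [AddCommGroup Γ] [LinearOrder Γ]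
    [IsOrderedAddMonoid Γ] (K : ℤ × ℤ → Γ) (hadd : ∀ a b, K (a + b) = K a + K b)
    (hinj : Function.Injective K) (q r : LP R) (hq : q ≠ 0) (hr : r ≠ 0) :
    ∃ a ∈ q.coeff.support, ∃ b ∈ r.coeff.support, (∀ m ∈ q.coeff.support, K m ≤ K a) ∧
      (∀ m ∈ r.coeff.support, K m ≤ K b) ∧ a + b ∈ (q * r).coeff.support := by
  have hq' : q.coeff.support.Nonempty := by
    rw [Finsupp.support_nonempty_iff]
    simpa using hq
  have hr' : r.coeff.support.Nonempty := by
    rw [Finsupp.support_nonempty_iff]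
    simpa using hr
  obtain ⟨a, ha, ha'⟩ := Finset.exists_max_image _ K hq'
  obtain ⟨b, hb, hb'⟩ := Finset.exists_max_image _ K hr'
  refine ⟨a, ha, b, hb, ha', hb', ?_⟩
  have hu : UniqueAdd q.coeff.support r.coeff.support a b := by
    intro x y hx hy hxy
    have h1 := ha' x hx
    have h2 := hb' y hy
    have h3 : K x + K y = K a + K b := by rw [← hadd, ← hadd, hxy]
    have h4 : K x = K a := by
      refine le_antisymm h1 ?_
      by_contra hlt
      exact absurd h3 (add_lt_add_of_lt_of_le (not_le.1 hlt) h2).ne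
    have h5 := hinj h4
    subst h5
    exact ⟨rfl, add_left_cancel hxy⟩
  rw [Finsupp.mem_support_iff, AddMonoidAlgebra.coeff_mul_add_of_uniqueAdd hu]
  exact mul_ne_zero (Finsupp.mem_support_iff.1 ha) (Finsupp.mem_support_iff.1 hb)

/-- determinant -/
def dt (m t : ℤ × ℤ) : ℤ := m.1 * t.2 - m.2 * t.1

theorem key_inj (t : ℤ × ℤ) (ht : t ≠ 0) (m m' : ℤ × ℤ) (h1 : dt m t = dt m' t)
    (h2 : m.1 * t.1 + m.2 * t.2 = m'.1 * t.1 + m'.2 * t.2) : m = m' := by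
  obtain ⟨t1, t2⟩ := t
  obtain ⟨a, b⟩ := m
  obtain ⟨a', b'⟩ := m'
  simp only [dt] at h1 h2
  have hpos : t1 ^ 2 + t2 ^ 2 ≠ 0 := by
    intro h
    apply ht
    have e1 : t1 = 0 := by nlinarith [sq_nonneg t1, sq_nonneg t2]
    have e2 : t2 = 0 := by nlinarith [sq_nonneg t1, sq_nonneg t2]
    simp [e1, e2]
  have e1 : (a - a') * (t1 ^ 2 + t2 ^ 2) = 0 := by linear_combination t2 * h1 + t1 * h2
  have e2 : (b - b') * (t1 ^ 2 + t2 ^ 2) = 0 := by linear_combination t2 * h2 - t1 * h1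
  have e3 := (mul_eq_zero.1 e1).resolve_right hpos
  have e4 := (mul_eq_zero.1 e2).resolve_right hpos
  ext <;> simp <;> omega

theorem exists_top_dt [IsDomain R] (t : ℤ × ℤ) (ht : t ≠ 0) (ε : ℤ) (hε : ε * ε = 1)
    (q r : LP R) (hq : q ≠ 0) (hr : r ≠ 0) :
    ∃ a ∈ q.coeff.support, ∃ b ∈ r.coeff.support,
      (∀ m ∈ q.coeff.support, ε * dt m t ≤ ε * dt a t) ∧
      (∀ m ∈ r.coeff.support, ε * dt m t ≤ ε * dt b t) ∧ a + b ∈ (q * r).coeff.support := by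
  have hle : ∀ x y : ℤ ×ₗ ℤ, x ≤ y → (ofLex x).1 ≤ (ofLex y).1 := by
    intro x y h
    rcases Prod.Lex.le_iff.1 h with h | h
    · exact h.le
    · exact h.1.le
  obtain ⟨a, ha, b, hb, h1, h2, h3⟩ := exists_top (Γ := ℤ ×ₗ ℤ)
    (fun m => toLex (ε * dt m t, m.1 * t.1 + m.2 * t.2))
    (by
      intro a b
      rw [← toLex_add]
      congr 1
      ext <;> simp [dt] <;> ring)
    (by
      intro m m' h
      have h := toLex.injective h
      simp only [Prod.mk.injEq] at h
      refine key_inj t ht m m' ?_ h.2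
      have := congrArg (fun z => ε * z) h.1
      simpa [← mul_assoc, hε] using this) q r hq hr
  exact ⟨a, ha, b, hb, fun m hm => hle _ _ (h1 m hm), fun m hm => hle _ _ (h2 m hm), h3⟩

theorem dt_const_of_dvd [IsDomain R] (t : ℤ × ℤ) (ht : t ≠ 0) (q r : LP R)
    (h : q * r = single t 1 - 1) (m m' : ℤ × ℤ) (hm : m ∈ q.coeff.support)
    (hm' : m' ∈ q.coeff.support) : dt m t ≤ dt m' t := by
  have hne : q * r ≠ 0 := by
    rw [h, sub_ne_zero, AddMonoidAlgebra.one_def, Ne, AddMonoidAlgebra.single_left_inj one_ne_zero]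
    exact ht
  have hs : ∀ x ∈ (q * r).coeff.support, dt x t = 0 := by
    classical
    intro x hx
    by_contra hx0
    rw [h, Finsupp.mem_support_iff] at hx
    apply hx
    have h1 : t ≠ x := by
      rintro rfl
      exact hx0 (by simp [dt]; ring)
    have h2 : 0 ≠ x := by
      rintro rfl
      exact hx0 (by simp [dt])
    simp [AddMonoidAlgebra.one_def, Finsupp.single_apply, h1, h2]
  have hadd : ∀ a b, dt (a + b) t = dt a t + dt b t := by
    intro a b
    simp [dt]
    ring
  have hq := left_ne_zero_of_mul hne
  have hr := right_ne_zero_of_mul hne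
  obtain ⟨a, ha, b, hb, h1, h2, h3⟩ := exists_top_dt t ht 1 (by norm_num) q r hq hr
  obtain ⟨a', ha', b', hb', h1', h2', h3'⟩ := exists_top_dt t ht (-1) (by norm_num) q r hq hr
  have e1 := hs _ h3
  have e2 := hs _ h3'
  rw [hadd] at e1 e2
  have := h1 m hm
  have := h1' m' hm'
  have := h2 b' hb'
  linarith

theorem isLinePoly_of_dvd {F : Type*} [Field F] (t : ℤ × ℤ) (ht : t ≠ 0) (q r : LP F)
    (h : q * r = single t 1 - 1) (hu : ¬ IsUnit q) (hq0 : q ≠ 0) : IsLinePoly t q := by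
  have hq' : q.coeff.support.Nonempty := by
    rw [Finsupp.support_nonempty_iff]
    simpa using hq0
  constructor
  · by_contra hcard
    have h1 : q.coeff.support.card = 1 := le_antisymm (not_lt.1 hcard) hq'.card_pos
    obtain ⟨m, a, ha, hqa⟩ := Finsupp.card_support_eq_one'.1 h1
    apply hu
    have e : q = single m a := by
      rw [← AddMonoidAlgebra.coeff_inj, hqa]
      rfl
    rw [e]
    refine IsUnit.of_mul_eq_one (single (-m) a⁻¹) ?_
    rw [AddMonoidAlgebra.single_mul_single, add_neg_cancel, mul_inv_cancel₀ ha,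
      AddMonoidAlgebra.one_def]
  · obtain ⟨n, hn⟩ := hq'
    refine ⟨n, fun m hm => ?_⟩
    have e := le_antisymm (dt_const_of_dvd t ht q r h m n hm hn)
      (dt_const_of_dvd t ht q r h n m hn hm)
    have e' : (m.1 : ℚ) * t.2 - m.2 * t.1 = n.1 * t.2 - n.2 * t.1 := by
      unfold dt at e
      exact_mod_cast e
    by_cases h1 : t.1 = 0
    · have h2 : (t.2 : ℚ) ≠ 0 := by
        intro h2
        apply ht
        ext
        · exact h1
        · exact_mod_cast h2
      refine ⟨(m.2 - n.2) / t.2, ?_, ?_⟩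
      · rw [h1] at e' ⊢
        simp only [Int.cast_zero, mul_zero, sub_zero, add_zero] at e' ⊢
        exact mul_right_cancel₀ h2 e'
      · field_simp
        ring
    · have h2 : (t.1 : ℚ) ≠ 0 := by exact_mod_cast h1
      refine ⟨(m.1 - n.1) / t.1, ?_, ?_⟩
      · field_simp
        ring
      · field_simp
        linear_combination -e'

theorem parallel_of_isLinePoly (t u : ℤ × ℤ) (ht : t ≠ 0) (q : LP R) 
    (h1 : IsLinePoly t q) (h2 : IsLinePoly u q) : dt t u = 0 := by
  obtain ⟨hc, n, hn⟩ := h1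
  obtain ⟨-, n', hn'⟩ := h2
  obtain ⟨x, hx, y, hy, hxy⟩ := Finset.one_lt_card.1 hc
  obtain ⟨r, h1, h2⟩ := hn x hx
  obtain ⟨s, h3, h4⟩ := hn y hy
  obtain ⟨r', h1', h2'⟩ := hn' x hx
  obtain ⟨s', h3', h4'⟩ := hn' y hy
  have hrs : r - s ≠ 0 := by
    intro h
    have : r = s := by linarith
    subst this
    apply hxy
    ext
    · exact_mod_cast h1.trans h3.symm
    · exact_mod_cast h2.trans h4.symm
  have e1 : (r - s) * (t.1 : ℚ) = (r' - s') * u.1 := by linear_combination h3 - h1 + h1' - h3'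
  have e2 : (r - s) * (t.2 : ℚ) = (r' - s') * u.2 := by linear_combination h4 - h2 + h2' - h4'
  have e3 : (r - s) * ((t.1 : ℚ) * u.2 - t.2 * u.1) = 0 := by
    linear_combination e1 * u.2 - e2 * u.1
  have e4 := (mul_eq_zero.1 e3).resolve_left hrs
  unfold dt
  exact_mod_cast e4

theorem ufm (F : Type*) [Field F] : UniqueFactorizationMonoid (LP F) := by
  have h1 : UniqueFactorizationMonoid (LaurentPolynomial F) :=
    UniqueFactorizationMonoid.of_isLocalization
      (Submonoid.powers (Polynomial.X : Polynomial F)) (LaurentPolynomial F)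
  have h2 : UniqueFactorizationMonoid (LaurentPolynomial (LaurentPolynomial F)) :=
    UniqueFactorizationMonoid.of_isLocalization
      (Submonoid.powers (Polynomial.X : Polynomial (LaurentPolynomial F))) _
  exact MulEquiv.uniqueFactorizationMonoid
    (AddMonoidAlgebra.curryRingEquiv (R := F) (M := ℤ) (N := ℤ)).symm.toMulEquiv h2

theorem sub_one_dvd (t : ℤ × ℤ) (k : ℤ) :
    (single t 1 - 1 : LP R) ∣ single (k • t) 1 - 1 := by
  induction k using Int.induction_on with
  | zero => simp [AddMonoidAlgebra.one_def]
  | succ i ih =>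
    have e : (single (((i : ℤ) + 1) • t) 1 - 1 : LP R) =
        single t 1 * (single ((i : ℤ) • t) 1 - 1) + (single t 1 - 1) := by
      rw [mul_sub, AddMonoidAlgebra.single_mul_single, add_smul, one_smul, add_comm t]
      simp
    rw [e]
    exact dvd_add (ih.mul_left _) dvd_rfl
  | pred i ih =>
    have e : (single ((-(i : ℤ) - 1) • t) 1 - 1 : LP R) =
        single (-t) 1 * (single ((-(i : ℤ)) • t) 1 - 1) - single (-t) 1 * (single t 1 - 1) := by
      rw [mul_sub, mul_sub, AddMonoidAlgebra.single_mul_single,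
        AddMonoidAlgebra.single_mul_single, sub_smul, one_smul, add_comm (-t), ← sub_eq_add_neg,
        neg_add_cancel, ← AddMonoidAlgebra.one_def.symm]
      simp [AddMonoidAlgebra.one_def]
    rw [e]
    exact dvd_sub (ih.mul_left _) (dvd_mul_left _ _)

/-- inclusion of Laurent polynomials in `X^u`. -/
noncomputable def iota (R : Type*) [CommRing R] (u : ℤ × ℤ) : AddMonoidAlgebra R ℤ →+* LP R :=
  AddMonoidAlgebra.mapDomainRingHom R (zmultiplesHom (ℤ × ℤ) u)

theorem iota_single (u : ℤ × ℤ) (k : ℤ) (a : R) : iota R u (single k a) = single (k • u) a := by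
  rw [iota, AddMonoidAlgebra.mapDomainRingHom_apply, AddMonoidAlgebra.mapDomain_single]
  rfl

/-- there is a nonzero polynomial in `X^u` in the ideal `(f, g)`. -/
def Good (u : ℤ × ℤ) (f g : LP R) : Prop :=
  ∃ b : AddMonoidAlgebra R ℤ, b ≠ 0 ∧ ∃ x y : LP R, iota R u b = x * f + y * g

theorem Good.mul [IsDomain R] {u : ℤ × ℤ} {f g h : LP R} (h1 : Good u f g) (h2 : Good u f h) :
    Good u f (g * h) := by
  obtain ⟨b, hb, x, y, e⟩ := h1
  obtain ⟨b', hb', x', y', e'⟩ := h2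
  refine ⟨b * b', mul_ne_zero hb hb', x * (x' * f + y' * h) + y * g * x', y * y', ?_⟩
  rw [map_mul, e, e']
  ring

theorem Good.of_isUnit [Nontrivial R] {u : ℤ × ℤ} {f g : LP R} (h : IsUnit g) : Good u f g := by
  obtain ⟨y, hy⟩ := h.exists_left_inv
  exact ⟨1, one_ne_zero, 0, y, by simp [hy]⟩

theorem Good.of_prime {F : Type*} [Field F] {t u : ℤ × ℤ} (hd : dt t u ≠ 0) {f q : LP F}
    (hq : Prime q) (hqt : q ∣ single t 1 - 1) (hqf : ¬ q ∣ f) : Good u f q := by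
  let I : Ideal (LP F) := Ideal.span {q}
  have hI : I.IsPrime := (Ideal.span_singleton_prime hq.ne_zero).2 hq
  let ψ : AddMonoidAlgebra F ℤ →+* LP F ⧸ I := (Ideal.Quotient.mk I).comp (iota F u)
  letI := ψ.toAlgebra
  have hψ : ∀ b, algebraMap (AddMonoidAlgebra F ℤ) (LP F ⧸ I) b =
    Ideal.Quotient.mk I (iota F u b) := fun _ => rfl
  have hX : ∀ m : ℤ × ℤ, IsIntegral (AddMonoidAlgebra F ℤ) (Ideal.Quotient.mk I (single m 1)) := by
    intro m
    have hN : 0 < (dt t u).natAbs * (dt t u).natAbs :=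
      Nat.mul_pos (Int.natAbs_pos.2 hd) (Int.natAbs_pos.2 hd)
    refine IsIntegral.of_pow hN ?_
    have e : ((dt t u).natAbs * (dt t u).natAbs) • m =
        (dt t u * dt m u) • t + (dt t u * dt t m) • u := by
      rw [← natCast_zsmul, Int.natAbs_mul_self]
      ext <;> simp [dt] <;> ring
    have e2 : Ideal.Quotient.mk I (single m 1 ^ ((dt t u).natAbs * (dt t u).natAbs)) =
        algebraMap (AddMonoidAlgebra F ℤ) (LP F ⧸ I) (single (dt t u * dt t m) 1) := by
      rw [hψ, iota_single, Ideal.Quotient.mk_eq_mk_iff_sub_mem, Ideal.mem_span_singleton,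
        AddMonoidAlgebra.single_pow, one_pow, e]
      have e3 : (single ((dt t u * dt m u) • t + (dt t u * dt t m) • u) 1 -
          single ((dt t u * dt t m) • u) 1 : LP F) =
          (single ((dt t u * dt m u) • t) 1 - 1) * single ((dt t u * dt t m) • u) 1 := by
        rw [sub_mul, AddMonoidAlgebra.single_mul_single]
        simp
      rw [e3]
      exact (hqt.trans (sub_one_dvd t _)).mul_right _
    rw [← map_pow, e2]
    exact isIntegral_algebraMap
  have hint : ∀ g : LP F, IsIntegral (AddMonoidAlgebra F ℤ) (Ideal.Quotient.mk I g) := by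
    intro g
    induction g using AddMonoidAlgebra.induction_linear with
    | zero =>
      rw [map_zero]
      exact isIntegral_zero
    | add f g hf hg =>
      rw [map_add]
      exact hf.add hg
    | single m a =>
      have e : (single m a : LP F) = iota F u (single 0 a) * single m 1 := by
        rw [iota_single, AddMonoidAlgebra.single_mul_single]
        simp
      rw [e, map_mul, ← hψ]
      exact isIntegral_algebraMap.mul (hX m)
  have hf0 : Ideal.Quotient.mk I f ≠ 0 := by
    rw [Ne, Ideal.Quotient.eq_zero_iff_mem, Ideal.mem_span_singleton]
    exact hqf
  have hbot := Ideal.comap_ne_bot_of_integral_mem (R := AddMonoidAlgebra F ℤ) hf0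
    (Ideal.mem_span_singleton_self _) (hint f)
  obtain ⟨b, hb, hb0⟩ := Submodule.exists_mem_ne_zero_of_ne_bot hbot
  rw [Ideal.mem_comap, Ideal.mem_span_singleton'] at hb
  obtain ⟨x', hx'⟩ := hb
  obtain ⟨x, rfl⟩ := Ideal.Quotient.mk_surjective x'
  rw [hψ, ← map_mul, eq_comm, Ideal.Quotient.mk_eq_mk_iff_sub_mem, Ideal.mem_span_singleton'] at hx'
  obtain ⟨y, hy⟩ := hx'
  exact ⟨b, hb0, x, y, by rw [hy]; ring⟩

theorem Good.of_sub_one {F : Type*} [Field F] {t u : ℤ × ℤ} (ht : t ≠ 0) (hu : u ≠ 0) {f : LP F}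
    (hline : ∀ g : LP F, g ∣ f → (∃ v : ℤ × ℤ, v ≠ 0 ∧ IsLinePoly v g) → IsLinePoly u g) :
    Good u f (single t 1 - 1) := by
  by_cases hd : dt t u = 0
  · obtain ⟨l, k, hl, hlk⟩ : ∃ l k : ℤ, l ≠ 0 ∧ l • u = k • t := by
      obtain ⟨t1, t2⟩ := t
      obtain ⟨u1, u2⟩ := u
      simp only [dt] at hd
      by_cases h1 : u1 = 0
      · subst h1
        have h2 : u2 ≠ 0 := by
          rintro rfl
          exact hu rfl
        have h3 : t1 = 0 := by simpa [h2] using hd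
        subst h3
        refine ⟨t2, u2, ?_, ?_⟩
        · rintro rfl
          exact ht rfl
        · ext <;> simp [mul_comm]
      · refine ⟨t1, u1, ?_, ?_⟩
        · rintro rfl
          have h3 : t2 = 0 := by simpa [h1] using hd
          subst h3
          exact ht rfl
        · ext <;> simp <;> linarith
    obtain ⟨y, hy⟩ := sub_one_dvd (R := F) t k
    refine ⟨single l 1 - 1, ?_, 0, y, ?_⟩
    · rw [sub_ne_zero, AddMonoidAlgebra.one_def, Ne,
        AddMonoidAlgebra.single_left_inj one_ne_zero]
      exact hl
    · rw [map_sub, map_one, iota_single, hlk, hy]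
      ring
  · have := ufm F
    have hne : (single t 1 - 1 : LP F) ≠ 0 := by
      rw [sub_ne_zero, AddMonoidAlgebra.one_def, Ne,
        AddMonoidAlgebra.single_left_inj one_ne_zero]
      exact ht
    suffices H : ∀ a : LP F, a ∣ single t 1 - 1 → Good u f a from H _ dvd_rfl
    intro a
    induction a using UniqueFactorizationMonoid.induction_on_prime with
    | h₁ =>
      intro h
      exact absurd (zero_dvd_iff.1 h) hne
    | h₂ x hx => exact fun _ => Good.of_isUnit hx
    | h₃ a q ha hq ih =>
      intro h
      refine Good.mul (Good.of_prime hd hq ((dvd_mul_right _ _).trans h) ?_)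
        (ih ((dvd_mul_left _ _).trans h))
      intro hqf
      obtain ⟨r, hr⟩ := (dvd_mul_right q a).trans h
      have h1 := isLinePoly_of_dvd t ht q r hr.symm hq.not_unit hq.ne_zero
      exact hd (parallel_of_isLinePoly t u ht q h1 (hline q hqf ⟨t, ht, h1⟩))

theorem dvd_sub_one (p : ℕ) [Fact p.Prime] (b : AddMonoidAlgebra (ZMod p) ℤ) (hb : b ≠ 0) :
    ∃ k : ℤ, k ≠ 0 ∧ b ∣ single k 1 - 1 := by
  obtain ⟨n, g, hg⟩ := LaurentPolynomial.exists_T_pow (R := ZMod p) b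
  have hg0 : g ≠ 0 := by
    rintro rfl
    rw [map_zero, eq_comm, mul_eq_zero] at hg
    exact hg.elim hb (LaurentPolynomial.isUnit_T _).ne_zero
  have h1 : Module.Finite (ZMod p) (AdjoinRoot g) := (AdjoinRoot.powerBasis hg0).finite
  have h2 : Finite (AdjoinRoot g) := Module.finite_of_finite (ZMod p)
  obtain ⟨i, j, hij, he⟩ : ∃ i j : ℕ, i < j ∧ AdjoinRoot.root g ^ i = AdjoinRoot.root g ^ j := by
    obtain ⟨i, j, hne, he⟩ :=
      Finite.exists_ne_map_eq_of_infinite (fun i : ℕ => AdjoinRoot.root g ^ i)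
    rcases lt_or_gt_of_ne hne with h | h
    · exact ⟨i, j, h, he⟩
    · exact ⟨j, i, h, he.symm⟩
  have h3 : g ∣ Polynomial.X ^ j - Polynomial.X ^ i := by
    rw [← AdjoinRoot.mk_eq_zero]
    simp [he]
  have h4 := map_dvd (Polynomial.toLaurent (R := ZMod p)) h3
  rw [hg, map_sub, Polynomial.toLaurent_X_pow, Polynomial.toLaurent_X_pow] at h4
  have h5 : b ∣ LaurentPolynomial.T (j : ℤ) - LaurentPolynomial.T (i : ℤ) :=
    (dvd_mul_right _ _).trans h4
  have h6 := h5.mul_right (LaurentPolynomial.T (-(i : ℤ)))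
  rw [sub_mul, ← LaurentPolynomial.T_add, ← LaurentPolynomial.T_add, add_neg_cancel,
    LaurentPolynomial.T_zero] at h6
  exact ⟨j + -i, by omega, h6⟩

end LinePer

/-- if all line polynomial factors of f are in direction u and c ∈ X_f has a
nonzero annihilator over ℤ, then c is periodic in direction u. -/
theorem line_factors_one_direction_periodic (p : ℕ) [Fact p.Prime] (f : LP (ZMod p))
    (hf : f ≠ 0) (u : ℤ × ℤ) (hu : u ≠ 0)
    (hline : ∀ g : LP (ZMod p), g ∣ f → (∃ v : ℤ × ℤ, v ≠ 0 ∧ IsLinePoly v g) →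
      IsLinePoly u g)
    (c : ℤ × ℤ → ZMod p) (hc : Annihilates f c)
    (h : ∃ f' : LP ℤ, f' ≠ 0 ∧ Annihilates f' (fun n => ((c n).val : ℤ))) :
    ∃ k : ℤ, k ≠ 0 ∧ IsPeriodVector c (k • u) := by
  classical
  obtain ⟨F, hF0, hF⟩ := h
  rw [LinePer.annihilates_iff] at hF hc
  have hb : ∀ n, |((c n).val : ℤ)| ≤ p := by
    intro n
    rw [abs_of_nonneg (by positivity)]
    exact_mod_cast (ZMod.val_lt (c n)).le
  obtain ⟨r, s, v0, hr, hv0, hG⟩ := LinePer.exists_product F hF0 _ p hb hF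
  have hGp : LinePer.act (ZMod p) (∏ v ∈ s, (AddMonoidAlgebra.single (r • v0) 1 -
      AddMonoidAlgebra.single (r • v) 1)) c = 0 := by
    funext n
    have e := LinePer.act_map (Int.castRingHom (ZMod p)) _ _ n |>.trans
      (congrArg (Int.castRingHom (ZMod p)) (congrFun hG n))
    simpa [map_prod] using e
  have hgood : LinePer.Good u f (∏ v ∈ s, (AddMonoidAlgebra.single (r • v0) 1 -
      AddMonoidAlgebra.single (r • v) 1)) := by
    refine Finset.prod_induction _ (LinePer.Good u f) (fun _ _ h1 h2 => h1.mul h2)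
      (LinePer.Good.of_isUnit isUnit_one) ?_
    intro v hv
    have e : (AddMonoidAlgebra.single (r • v0) 1 - AddMonoidAlgebra.single (r • v) 1 :
        LP (ZMod p)) = AddMonoidAlgebra.single (r • v) 1 *
          (AddMonoidAlgebra.single (r • (v0 - v)) 1 - 1) := by
      rw [mul_sub, AddMonoidAlgebra.single_mul_single, ← smul_add, add_sub_cancel]
      simp
    rw [e]
    refine LinePer.Good.mul (LinePer.Good.of_isUnit ?_) (LinePer.Good.of_sub_one ?_ hu hline)
    · refine IsUnit.of_mul_eq_one (AddMonoidAlgebra.single (-(r • v)) 1) ?_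
      rw [AddMonoidAlgebra.single_mul_single, add_neg_cancel, mul_one, AddMonoidAlgebra.one_def]
    · refine smul_ne_zero hr (sub_ne_zero.2 ?_)
      rintro rfl
      exact hv0 hv
  obtain ⟨b, hb0, x, y, hxy⟩ := hgood
  have hbI : LinePer.iota (ZMod p) u b ∈ LinePer.annI c := by
    rw [hxy]
    exact Ideal.add_mem _ (Ideal.mul_mem_left _ _ hc) (Ideal.mul_mem_left _ _ hGp)
  obtain ⟨k, hk, hdvd⟩ := LinePer.dvd_sub_one p b hb0
  have h1 := Ideal.mem_of_dvd _ (map_dvd (LinePer.iota (ZMod p) u) hdvd) hbI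
  rw [map_sub, map_one, LinePer.iota_single, LinePer.mem_annI] at h1
  refine ⟨k, hk, smul_ne_zero hk hu, fun n => ?_⟩
  have h2 := congrFun h1 (n + k • u)
  rw [map_sub, map_one, LinearMap.sub_apply, Pi.sub_apply, LinePer.act_single] at h2
  simp only [add_sub_cancel_right, one_mul, Module.End.one_apply, Pi.zero_apply] at h2
  exact (sub_eq_zero.1 h2).symm
end
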